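/- If G is a finite group, then there is an integer M_G such that for every integer u with u ≥ M_G and u ≡ 1 or 3 (mod 6), there exists a Steiner triple system U on u points whose automorphism group Aut U is isomorphic to G. -/

import Mathlib

open Finset

noncomputable section
open scoped Classical

/-- `T` is the set of triples of a Steiner triple system on the finite type `α`:
every pair of distinct points lies in exactly one triple. -/
def IsSTS {α : Type*} (T : Finset (Finset α)) : Prop :=
  (∀ t ∈ T, t.card = 3) ∧
    ∀ p q : α, p ≠ q → ∃! t : Finset α, t ∈ T ∧ p ∈ t ∧ q ∈ t

/-- `T` is the set of triples of a partial Steiner triple system on `α`: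
every pair of distinct points lies in at most one triple. -/
def IsPSTS {α : Type*} (T : Finset (Finset α)) : Prop :=
  (∀ t ∈ T, t.card = 3) ∧
    ∀ p q : α, p ≠ q → ∀ t₁ ∈ T, ∀ t₂ ∈ T, p ∈ t₁ → q ∈ t₁ → p ∈ t₂ → q ∈ t₂ → t₁ = t₂

/-- `W` is a (closed) subsystem of the triple system `T`. -/
def IsSub {α : Type*} (T : Finset (Finset α)) (W : Finset α) : Prop :=
  ∀ t ∈ T, 2 ≤ (t ∩ W).card → t ⊆ W

/-- `g` is an automorphism of the triple system `T`. -/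
def IsAut {α : Type*} (T : Finset (Finset α)) (g : Equiv.Perm α) : Prop :=
  ∀ t : Finset α, t ∈ T ↔ t.image g ∈ T

/-- The automorphism group of a triple system, as a subgroup of the permutation group. -/
def autGroup {α : Type*} (T : Finset (Finset α)) : Subgroup (Equiv.Perm α) where
  carrier := {g : Equiv.Perm α | IsAut T g}
  one_mem' := by
    intro t
    simp
  mul_mem' := by
    intro a b ha hb t
    have h1 := hb t
    have h2 := ha (t.image b)
    have key : t.image ⇑(a * b) = (t.image ⇑b).image ⇑a := by
      rw [Equiv.Perm.coe_mul, Finset.image_image]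
    rw [key, ← h2]
    exact h1
  inv_mem' := by
    intro a ha t
    have h := ha (t.image ⇑a⁻¹)
    have key : (t.image ⇑a⁻¹).image ⇑a = t := by
      rw [Finset.image_image]
      have hc : (⇑a ∘ ⇑a⁻¹) = id := by
        funext x
        simp
      rw [hc, Finset.image_id]
    rw [key] at h
    exact h.symm

/-- `φ` embeds the triple system `S` onto a subsystem of `T`: it is injective, maps
triples of `S` to triples of `T`, and the triples of `T` inside the image of `φ` are
precisely the images of the triples of `S`. -/
def IsCopy {α β : Type*} [Fintype α] (S : Finset (Finset α)) (T : Finset (Finset β))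
    (φ : α → β) : Prop :=
  Function.Injective φ ∧ (∀ s ∈ S, s.image φ ∈ T) ∧
    ∀ t ∈ T, t ⊆ Finset.univ.image φ → ∃ s ∈ S, t = s.image φ

/-- The point set `W` is invariant under every automorphism of `T`. -/
def AutInvariant {β : Type*} (T : Finset (Finset β)) (W : Finset β) : Prop :=
  ∀ g : Equiv.Perm β, IsAut T g → W.image g = W

/-- For the copy of `S` inside `T` given by `φ`, restriction gives a group isomorphism
from `Aut T` onto `Aut S`: every automorphism of `T` induces (via `φ`) an automorphism
of `S`, and every automorphism of `S` is induced by exactly one automorphism of `T`. -/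
def AutRestrictIso {α β : Type*} (T : Finset (Finset β)) (S : Finset (Finset α))
    (φ : α → β) : Prop :=
  (∀ g : Equiv.Perm β, IsAut T g →
      ∃ h : Equiv.Perm α, IsAut S h ∧ ∀ x : α, g (φ x) = φ (h x)) ∧
    ∀ h : Equiv.Perm α, IsAut S h →
      ∃! g : Equiv.Perm β, IsAut T g ∧ ∀ x : α, g (φ x) = φ (h x)

/-- `φ` embeds `S` as an `Aut T`-invariant subsystem of `T` on which `Aut T` induces
the full automorphism group of `S`, with `Aut T ≅ Aut S` via restriction. -/
def FullEmbedding {α β : Type*} [Fintype α] (S : Finset (Finset α)) (T : Finset (Finset β))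
    (φ : α → β) : Prop :=
  IsCopy S T φ ∧ AutInvariant T (Finset.univ.image φ) ∧ AutRestrictIso T S φ

/-- The points of the projective space `PG(n,2)`: nonzero vectors of `GF(2)^{n+1}`. -/
abbrev PGPoint (n : ℕ) := {x : Fin (n + 1) → ZMod 2 // x ≠ 0}

/-- The lines of `PG(n,2)`: 3-sets of nonzero vectors summing to `0`. -/
def PGTriples (n : ℕ) : Finset (Finset (PGPoint n)) :=
  Finset.univ.filter fun t : Finset (PGPoint n) =>
    t.card = 3 ∧ ∑ v ∈ t, (v : Fin (n + 1) → ZMod 2) = 0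

/-- The smallest subsystem of `T` containing the point set `P`. -/
def GeneratedSub {α : Type*} [Fintype α] (T : Finset (Finset α)) (P : Finset α) : Finset α :=
  Finset.univ.filter fun x => ∀ W : Finset α, IsSub T W → P ⊆ W → x ∈ W

/-- `W` is a subsystem of `T` isomorphic to `PG(n,2)`. -/
def IsPGSub {α : Type*} [Fintype α] (n : ℕ) (T : Finset (Finset α)) (W : Finset α) : Prop :=
  ∃ φ : PGPoint n → α, IsCopy (PGTriples n) T φ ∧ Finset.univ.image φ = W

/-- A triple system is `PG(2,2)`-paired if any two distinct points lie in at least two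
subsystems isomorphic to `PG(2,2)`. -/
def PG22Paired {α : Type*} [Fintype α] (T : Finset (Finset α)) : Prop :=
  ∀ p q : α, p ≠ q → ∃ W₁ W₂ : Finset α, W₁ ≠ W₂ ∧
    (p ∈ W₁ ∧ q ∈ W₁ ∧ IsPGSub 2 T W₁) ∧ p ∈ W₂ ∧ q ∈ W₂ ∧ IsPGSub 2 T W₂

/-- `T` is `PG(3,2)`-2-pointed with respect to the points `p, q`: any four points
including `p` and `q` generate a subsystem isomorphic to `PG(2,2)` or `PG(3,2)`. -/
def PG32TwoPointed {α : Type*} [Fintype α] (T : Finset (Finset α)) (p q : α) : Prop :=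
  p ≠ q ∧ ∀ s : Finset α, s.card = 4 → p ∈ s → q ∈ s →
    IsPGSub 2 T (GeneratedSub T s) ∨ IsPGSub 3 T (GeneratedSub T s)

/-- The copy of `Y` inside `2Y+1`. -/
def dp0 {γ : Type*} (a : γ) : γ ⊕ γ ⊕ Unit := Sum.inl a

/-- The disjoint copy `Y₁` of `Y` inside `2Y+1`. -/
def dp1 {γ : Type*} (a : γ) : γ ⊕ γ ⊕ Unit := Sum.inr (Sum.inl a)

/-- The extra point `*` of `2Y+1`. -/
def dpStar {γ : Type*} : γ ⊕ γ ⊕ Unit := Sum.inr (Sum.inr ())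

/-- The triples of the Steiner triple system `2Y+1` built from a system `Y` with
triple set `T`. -/
def DoubleTriples {γ : Type*} [Fintype γ] (T : Finset (Finset γ)) :
    Finset (Finset (γ ⊕ γ ⊕ Unit)) :=
  Finset.univ.filter fun t : Finset (γ ⊕ γ ⊕ Unit) =>
    (∃ s ∈ T, t = s.image dp0) ∨
    (∃ a : γ, t = {dpStar, dp0 a, dp1 a}) ∨
    (∃ a b c : γ, ({a, b, c} : Finset γ) ∈ T ∧ t = {dp1 a, dp1 b, dp0 c})

/-- The triples of the direct product of two triple systems. -/
def ProdTriples {α β : Type*} [Fintype α] [Fintype β]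
    (TA : Finset (Finset α)) (TB : Finset (Finset β)) : Finset (Finset (α × β)) :=
  Finset.univ.filter fun t : Finset (α × β) =>
    (∃ a : α, ∃ s ∈ TB, t = s.image fun b => (a, b)) ∨
    (∃ b : β, ∃ s ∈ TA, t = s.image fun a => (a, b)) ∨
    (∃ a₁ a₂ a₃ : α, ∃ b₁ b₂ b₃ : β, ({a₁, a₂, a₃} : Finset α) ∈ TA ∧
      ({b₁, b₂, b₃} : Finset β) ∈ TB ∧ t = {(a₁, b₁), (a₂, b₂), (a₃, b₃)})

/-- The triples of Moore's construction `U = X ∪ (V × A)`.  Here `TX` (on `δ`), `TV`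
(on `α`), `TY` (on `γ`) are the triple sets of `X`, `V`, `Y`; `j : δ → γ` embeds `X`
as a subsystem of `Y` and `ℓ : A → γ` labels `Y − X` by the group `A`. -/
def MooreTriples {δ α γ A : Type*} [Fintype δ] [Fintype α] [Fintype A] [Group A]
    (TX : Finset (Finset δ)) (TV : Finset (Finset α)) (TY : Finset (Finset γ))
    (j : δ → γ) (ℓ : A → γ) : Finset (Finset (δ ⊕ α × A)) :=
  Finset.univ.filter fun t : Finset (δ ⊕ α × A) =>
    (∃ s ∈ TX, t = s.image Sum.inl) ∨
    (∃ v : α, ∃ a₁ a₂ : A, ∃ x : δ, ({ℓ a₁, ℓ a₂, j x} : Finset γ) ∈ TY ∧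
      t = {Sum.inr (v, a₁), Sum.inr (v, a₂), Sum.inl x}) ∨
    (∃ v : α, ∃ a₁ a₂ a₃ : A, ({ℓ a₁, ℓ a₂, ℓ a₃} : Finset γ) ∈ TY ∧
      t = {Sum.inr (v, a₁), Sum.inr (v, a₂), Sum.inr (v, a₃)}) ∨
    (∃ v₁ v₂ v₃ : α, ∃ a₁ a₂ a₃ : A, ({v₁, v₂, v₃} : Finset α) ∈ TV ∧ a₁ * a₂ * a₃ = 1 ∧
      t = {Sum.inr (v₁, a₁), Sum.inr (v₂, a₂), Sum.inr (v₃, a₃)})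

/-- The hypotheses of Moore's construction: `Y` and `V` are Steiner triple systems,
`A` is a cyclic group, `j` embeds `X` as a subsystem of `Y` (with triple set `TX`),
and `ℓ` is a bijective labeling of `Y − X` by `A`. -/
def MooreSetup {δ α γ A : Type*} [Fintype δ] [Group A]
    (TX : Finset (Finset δ)) (TV : Finset (Finset α)) (TY : Finset (Finset γ))
    (j : δ → γ) (ℓ : A → γ) : Prop :=
  IsSTS TY ∧ IsSTS TV ∧ IsCyclic A ∧ Function.Injective j ∧
    IsSub TY (Finset.univ.image j) ∧ IsCopy TX TY j ∧
    Function.Injective ℓ ∧ Set.range ℓ = (Set.range j)ᶜ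

/-- The subsystem `Y_v = X ∪ (v × A)` of Moore's construction. -/
def MooreY {δ α A : Type*} [Fintype δ] [Fintype A] (v : α) : Finset (δ ⊕ α × A) :=
  (Finset.univ.image (Sum.inl : δ → δ ⊕ α × A)) ∪
    Finset.univ.image fun a : A => (Sum.inr (v, a) : δ ⊕ α × A)

/-- A subsystem of type (3.1) of Moore's construction, where `ε` denotes the unique
involution `−1` of `A`: the seven points `x, (v_i, a_i), (v_i, −a_i)` for a triple
`{v₁,v₂,v₃}` of `V`, with `a₁a₂a₃ = 1` and `{a_i, −a_i, x}` a triple of `Y`. -/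
def MooreType31 {δ α γ A : Type*} [Group A] (TV : Finset (Finset α))
    (TY : Finset (Finset γ)) (j : δ → γ) (ℓ : A → γ) (ε : A)
    (W : Finset (δ ⊕ α × A)) : Prop :=
  ∃ v₁ v₂ v₃ : α, ∃ a₁ a₂ a₃ : A, ∃ x : δ,
    ({v₁, v₂, v₃} : Finset α) ∈ TV ∧ a₁ * a₂ * a₃ = 1 ∧
    ({ℓ a₁, ℓ (ε * a₁), j x} : Finset γ) ∈ TY ∧
    ({ℓ a₂, ℓ (ε * a₂), j x} : Finset γ) ∈ TY ∧
    ({ℓ a₃, ℓ (ε * a₃), j x} : Finset γ) ∈ TY ∧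
    W = {Sum.inl x, Sum.inr (v₁, a₁), Sum.inr (v₁, ε * a₁), Sum.inr (v₂, a₂),
         Sum.inr (v₂, ε * a₂), Sum.inr (v₃, a₃), Sum.inr (v₃, ε * a₃)}

/-- The point set of a family of triples. -/
def ptsOf {β : Type*} (T : Finset (Finset β)) : Finset β := T.sup id

/-- Adjacency of triples: two distinct triples of `T` meeting in a point. -/
def TriAdj {β : Type*} (T : Finset (Finset β)) (t s : Finset β) : Prop :=
  t ∈ T ∧ s ∈ T ∧ t ≠ s ∧ (t ∩ s).Nonempty

/-- A partial Steiner triple system is cyclic if the graph whose vertices are its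
triples, two joined when they meet, is a cycle (equivalently: it has at least three
triples, every triple meets exactly two others, and the graph is connected). -/
def IsCyclicPSTS {β : Type*} (T : Finset (Finset β)) : Prop :=
  3 ≤ T.card ∧ (∀ t ∈ T, (T.filter fun s => s ≠ t ∧ (s ∩ t).Nonempty).card = 2) ∧
    ∀ t ∈ T, ∀ s ∈ T, Relation.ReflTransGen (TriAdj T) t s

/-- The partial Steiner triple system `Q(z)` (for the parameter `n`), with triple set
`T`, point set `P` and distinguished point `z`: two cyclic PSTSs `C₁, C₂` on
`2n+4` and `2n+6` points meeting exactly in the point `z`, which lies in two triples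
of each, triples `{z, z'_i, z_i}` of `C_i` with `z'_i` in two triples of `C_i`, and a
new point `z'` in the single additional triple `{z'_1, z', z'_2}`. -/
def IsQ {β : Type*} (n : ℕ) (T : Finset (Finset β)) (P : Finset β) (z : β) : Prop :=
  ∃ C₁ C₂ : Finset (Finset β), ∃ z' z₁' z₂' z₁ z₂ : β,
    IsPSTS T ∧ IsCyclicPSTS C₁ ∧ IsCyclicPSTS C₂ ∧
    (ptsOf C₁).card = 2 * n + 4 ∧ (ptsOf C₂).card = 2 * n + 6 ∧
    ptsOf C₁ ∩ ptsOf C₂ = {z} ∧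
    (C₁.filter fun t => z ∈ t).card = 2 ∧ (C₂.filter fun t => z ∈ t).card = 2 ∧
    ({z, z₁', z₁} : Finset β) ∈ C₁ ∧ (C₁.filter fun t => z₁' ∈ t).card = 2 ∧
    ({z, z₂', z₂} : Finset β) ∈ C₂ ∧ (C₂.filter fun t => z₂' ∈ t).card = 2 ∧
    z' ∉ ptsOf C₁ ∪ ptsOf C₂ ∧
    T = C₁ ∪ C₂ ∪ {({z₁', z', z₂'} : Finset β)} ∧
    P = ptsOf C₁ ∪ ptsOf C₂ ∪ {z'}

/-- Nonempty subsets of `β`: the points of the projective space `P` over `GF(2)`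
built on a point set `β`. -/
abbrev NESet (β : Type*) := {s : Finset β // s.Nonempty}

/-- The triples of the projective space over `GF(2)` on the nonempty subsets of `β`:
3-sets of subsets with empty symmetric difference. -/
def sdTriples (β : Type*) [Fintype β] : Finset (Finset (NESet β)) :=
  Finset.univ.filter fun t : Finset (NESet β) =>
    ∃ a b c : NESet β, a ≠ b ∧ a ≠ c ∧ b ≠ c ∧ t = {a, b, c} ∧
      symmDiff (symmDiff a.1 b.1) c.1 = ∅

/-- The singleton `{a}` as a point of the projective space. -/
def sEl {β : Type*} (a : β) : NESet β := ⟨{a}, Finset.singleton_nonempty a⟩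

/-- The pair `{a,b}` as a point of the projective space. -/
def pEl {β : Type*} (a b : β) : NESet β := ⟨{a, b}, Finset.insert_nonempty a {b}⟩

/-- The triples of `P` removed in Cameron's construction, for each triple `{a,b,c}`
of `V'`. -/
def removedTriples {β : Type*} [Fintype β] (TV' : Finset (Finset β)) :
    Finset (Finset (NESet β)) :=
  Finset.univ.filter fun t : Finset (NESet β) =>
    ∃ a b c : β, ({a, b, c} : Finset β) ∈ TV' ∧
      (t = {pEl a b, pEl a c, pEl b c} ∨ t = {sEl a, sEl b, pEl a b} ∨
       t = {sEl a, sEl c, pEl a c} ∨ t = {sEl b, sEl c, pEl b c})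

/-- The new triples of Cameron's construction, for each triple `{a,b,c}` of `V'`. -/
def addedTriples {β : Type*} [Fintype β] (TV' : Finset (Finset β)) :
    Finset (Finset (NESet β)) :=
  Finset.univ.filter fun t : Finset (NESet β) =>
    ∃ a b c : β, ({a, b, c} : Finset β) ∈ TV' ∧
      (t = {sEl a, sEl b, sEl c} ∨ t = {sEl a, pEl a b, pEl a c} ∨
       t = {sEl b, pEl a b, pEl b c} ∨ t = {sEl c, pEl a c, pEl b c})

/-- The Steiner triple system `U` of Cameron's construction obtained from the
projective space `P` and the partial system `V'`. -/
def CameronSTS {β : Type*} [Fintype β] (TV' : Finset (Finset β)) :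
    Finset (Finset (NESet β)) :=
  (sdTriples β \ removedTriples TV') ∪ addedTriples TV'

/-- A Steiner quasigroup: an idempotent totally symmetric quasigroup. Sending two distinct points to
the third point of their triple identifies these with Steiner triple systems. -/
structure SteinerQuasigroup (α : Type*) where
  /-- The third point on the triple through two points. -/
  op : α → α → α
  op_self : ∀ p, op p p = p
  op_comm : ∀ p q, op p q = op q p
  op_op : ∀ p q, op p (op p q) = q

namespace SteinerQuasigroup

variable {α : Type*} (S : SteinerQuasigroup α)

lemma op_ne_left {p q : α} (h : p ≠ q) : S.op p q ≠ p := by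
  intro h'
  have := S.op_op p q
  rw [h', S.op_self] at this
  exact h this

lemma op_ne_right {p q : α} (h : p ≠ q) : S.op p q ≠ q := by
  rw [S.op_comm]
  exact S.op_ne_left h.symm

lemma op_op' (p q : α) : S.op (S.op p q) q = p := by
  rw [S.op_comm, S.op_comm p q, S.op_op]

lemma op_op_left (p q : α) : S.op (S.op p q) p = q := by
  rw [S.op_comm, S.op_op]

lemma op_op_right (p q : α) : S.op q (S.op p q) = p := by
  rw [S.op_comm, S.op_op']

/-- The automorphisms of a Steiner quasigroup. -/
def autSubgroup : Subgroup (Equiv.Perm α) where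
  carrier := {g | ∀ p q, g (S.op p q) = S.op (g p) (g q)}
  one_mem' := by intro p q; rfl
  mul_mem' := by
    intro a b ha hb p q
    change a (b (S.op p q)) = S.op (a (b p)) (a (b q))
    rw [hb, ha]
  inv_mem' := by
    intro a ha p q
    apply a.injective
    rw [ha]
    simp

/-- The triples of a Steiner quasigroup. -/
def triples [Fintype α] : Finset (Finset α) :=
  univ.filter fun t => ∃ p q, p ≠ q ∧ t = {p, q, S.op p q}

lemma mem_triples [Fintype α] {t : Finset α} :
    t ∈ S.triples ↔ ∃ p q, p ≠ q ∧ t = {p, q, S.op p q} := by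
  simp [triples]

lemma triple_eq {a b p q : α} (hp : p ∈ ({a, b, S.op a b} : Finset α))
    (hq : q ∈ ({a, b, S.op a b} : Finset α)) (hpq : p ≠ q) :
    ({a, b, S.op a b} : Finset α) = {p, q, S.op p q} := by
  simp only [mem_insert, mem_singleton] at hp hq
  rcases hp with hp | hp | hp <;> rcases hq with hq | hq | hq <;> rw [hp, hq] at hpq ⊢ <;>
    first
      | exact absurd rfl hpq
      | (ext r; simp [S.op_op, S.op_op', S.op_op_left, S.op_op_right, S.op_comm b a]; try tauto)

theorem isSTS_triples [Fintype α] : IsSTS S.triples := by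
  refine ⟨fun t ht => ?_, fun p q hpq => ?_⟩
  · obtain ⟨p, q, hpq, rfl⟩ := S.mem_triples.1 ht
    exact card_eq_three.2 ⟨p, q, _, hpq, (S.op_ne_left hpq).symm, (S.op_ne_right hpq).symm, rfl⟩
  · refine ⟨{p, q, S.op p q}, ⟨S.mem_triples.2 ⟨p, q, hpq, rfl⟩, by simp, by simp⟩, ?_⟩
    rintro t ⟨ht, hp, hq⟩
    obtain ⟨a, b, -, rfl⟩ := S.mem_triples.1 ht
    exact S.triple_eq hp hq hpq

lemma image_mem_triples [Fintype α] {g : Equiv.Perm α} (hg : g ∈ S.autSubgroup) {t : Finset α}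
    (ht : t ∈ S.triples) : t.image g ∈ S.triples := by
  obtain ⟨p, q, hpq, rfl⟩ := S.mem_triples.1 ht
  refine S.mem_triples.2 ⟨g p, g q, g.injective.ne hpq, ?_⟩
  simp [image_insert, hg p q]

theorem autGroup_triples [Fintype α] : autGroup S.triples = S.autSubgroup := by
  ext g
  change IsAut S.triples g ↔ _
  refine ⟨fun h p q => ?_, fun hg t => ⟨S.image_mem_triples hg, fun ht => ?_⟩⟩
  · by_cases hpq : p = q
    · simp [hpq, S.op_self]
    have ht := (h _).1 (S.mem_triples.2 ⟨p, q, hpq, rfl⟩)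
    obtain ⟨a, b, -, he⟩ := S.mem_triples.1 ht
    have hgpq : g p ≠ g q := g.injective.ne hpq
    have hp : g p ∈ ({a, b, S.op a b} : Finset α) := he ▸ mem_image_of_mem _ (by simp)
    have hq : g q ∈ ({a, b, S.op a b} : Finset α) := he ▸ mem_image_of_mem _ (by simp)
    have hr : g (S.op p q) ∈ ({a, b, S.op a b} : Finset α) := he ▸ mem_image_of_mem _ (by simp)
    rw [S.triple_eq hp hq hgpq] at hr
    simp only [mem_insert, mem_singleton] at hr
    rcases hr with hr | hr | hr
    · exact absurd (g.injective hr) (S.op_ne_left hpq)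
    · exact absurd (g.injective hr) (S.op_ne_right hpq)
    · exact hr
  · have := S.image_mem_triples (S.autSubgroup.inv_mem hg) ht
    rw [image_image] at this
    simpa [Function.comp_def] using this

/-- Transport of a Steiner quasigroup along a bijection. -/
def map {β : Type*} (e : α ≃ β) : SteinerQuasigroup β where
  op p q := e (S.op (e.symm p) (e.symm q))
  op_self p := by simp [S.op_self]
  op_comm p q := by rw [S.op_comm]
  op_op p q := by simp [S.op_op]

/-- Transport along a bijection preserves the automorphism group. -/
def autSubgroupMap {β : Type*} (e : α ≃ β) : S.autSubgroup ≃* (S.map e).autSubgroup where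
  toFun g := ⟨e.permCongr g.1, fun p q => by
    have := g.2 (e.symm p) (e.symm q)
    simp [map, this]⟩
  invFun g := ⟨e.symm.permCongr g.1, fun p q => by
    have := g.2 (e p) (e q)
    simp only [map, Equiv.symm_apply_apply] at this
    simp [this]⟩
  left_inv g := by ext; simp
  right_inv g := by ext; simp
  map_mul' g h := by ext; simp

/-- A Steiner quasigroup on a set of size `u` gives a Steiner triple system on `Fin u` with the same
automorphism group. -/
theorem exists_isSTS_fin [Fintype α] {u : ℕ} (hu : Fintype.card α = u) {G : Type*} [Group G]
    (e : G ≃* S.autSubgroup) :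
    ∃ T : Finset (Finset (Fin u)), IsSTS T ∧ Nonempty (G ≃* autGroup T) := by
  let f : α ≃ Fin u := Fintype.equivFinOfCardEq hu
  refine ⟨(S.map f).triples, (S.map f).isSTS_triples, ?_⟩
  rw [autGroup_triples]
  exact ⟨e.trans (S.autSubgroupMap f)⟩

end SteinerQuasigroup

/-- The Bose construction on `R × ZMod 3`, where `h` is half of the unit of `R`. -/
def boseQuasigroup {R : Type*} [CommRing R] (h : R) (hh : 2 * h = 1) :
    SteinerQuasigroup (R × ZMod 3) where
  op p q :=
    if p.2 = q.2 then if p.1 = q.1 then p else (h * (p.1 + q.1), p.2 + 1)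
    else if p.1 = q.1 then (p.1, -(p.2 + q.2))
    else if q.2 = p.2 + 1 then (2 * q.1 - p.1, p.2) else (2 * p.1 - q.1, q.2)
  op_self p := by simp
  op_comm p q := by
    obtain ⟨i, a⟩ := p
    obtain ⟨j, b⟩ := q
    have hab : ∀ a b : ZMod 3, a ≠ b → b ≠ a + 1 → a = b + 1 := by decide
    have hab' : ∀ a : ZMod 3, a ≠ a + 1 + 1 := by decide
    by_cases h1 : a = b
    · by_cases h2 : i = j <;> simp [h1, h2, eq_comm, add_comm]
    · by_cases h2 : i = j
      · simp [h1, h2, Ne.symm h1, add_comm]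
      · by_cases h3 : b = a + 1
        · subst h3
          simp [h2, Ne.symm h2, hab']
        · have h4 := hab a b h1 h3
          subst h4
          simp [h2, Ne.symm h2, hab']
  op_op p q := by
    obtain ⟨i, a⟩ := p
    obtain ⟨j, b⟩ := q
    have hh' : ∀ x : R, h * (2 * x) = x := fun x => by linear_combination x * hh
    have hinj : ∀ x y : R, 2 * x = 2 * y → x = y := fun x y hxy => by
      rw [← hh' x, hxy, hh']
    have hab : ∀ a b : ZMod 3, a ≠ b → b ≠ a + 1 → a = b + 1 := by decide
    have h01 : ∀ a : ZMod 3, a ≠ a + 1 := by decide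
    have h02 : ∀ a : ZMod 3, a ≠ a + 1 + 1 := by decide
    have h10 : ∀ a : ZMod 3, a + 1 ≠ a := by decide
    have hs : ∀ a b : ZMod 3, a ≠ b → a ≠ -(a + b) := by decide
    have hs' : ∀ a b : ZMod 3, a ≠ b → -(a + -(a + b)) = b := by decide
    by_cases h1 : a = b
    · subst h1
      by_cases h2 : i = j
      · simp [h2]
      · have h3 : i ≠ h * (i + j) := fun e => h2 <| by
          linear_combination 2 * e + (i + j) * hh
        simp only [if_true, h2, if_false, h3, h01, Prod.mk.injEq, and_true]
        linear_combination (i + j) * hh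
    · by_cases h2 : i = j
      · subst h2
        simp only [h1, if_false, if_true, hs a b h1, hs' a b h1]
      · by_cases h3 : b = a + 1
        · subst h3
          have h4 : i ≠ 2 * j - i := fun e => h2 (hinj _ _ (by linear_combination e))
          simp only [h01, if_true, h2, if_false, h4, Prod.mk.injEq, and_true]
          linear_combination j * hh
        · have h4 := hab a b h1 h3
          subst h4
          have h5 : i ≠ 2 * i - j := fun e => h2 (by linear_combination -e)
          simp only [h10, h02, h2, if_false, h5, Prod.mk.injEq, and_true]
          ring

theorem exists_steinerQuasigroup_of_card {X : Type*} [Fintype X] {k : ℕ}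
    (hX : Fintype.card X = 6 * k + 3) : Nonempty (SteinerQuasigroup X) := by
  have hh : (2 : ZMod (2 * k + 1)) * ((k + 1 : ℕ) : ZMod (2 * k + 1)) = 1 := by
    have := ZMod.natCast_self (2 * k + 1)
    push_cast at this ⊢
    linear_combination this
  refine ⟨(boseQuasigroup _ hh).map (Fintype.equivOfCardEq ?_)⟩
  rw [hX, Fintype.card_prod, ZMod.card, ZMod.card]
  ring

/-- A Steiner triple system on `X ⊕ A` containing `X` as a subsystem, without the triples in `X`:
`tri a b` is the third point of the triple through `a` and `b`, and `pt x a` is the third point of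
the triple through `x` and `a`. -/
structure Hole (X A : Type*) where
  /-- The third point of the triple through two points outside `X`. -/
  tri : A → A → X ⊕ A
  /-- The third point of the triple through a point in `X` and a point outside `X`. -/
  pt : X → A → A
  tri_self : ∀ a, tri a a = .inr a
  tri_comm : ∀ a b, tri a b = tri b a
  tri_inr : ∀ a b c, tri a b = .inr c → tri a c = .inr b
  tri_pt : ∀ x a, tri a (pt x a) = .inl x
  pt_tri : ∀ x a b, tri a b = .inl x → pt x a = b

namespace Hole

variable {X A : Type*} (h : Hole X A)

lemma pt_pt (x : X) (a : A) : h.pt x (h.pt x a) = a :=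
  h.pt_tri _ _ _ ((h.tri_comm _ _).trans (h.tri_pt x a))

/-- Every set closed under `h` and under translation by a subgroup of index at most `n` is
everything. -/
def Generating [AddCommGroup A] (n : ℕ) : Prop :=
  ∀ K : AddSubgroup A, K.index ≤ n → ∀ S : Set A, S.Nonempty →
    (∀ k ∈ K, ∀ s ∈ S, k + s ∈ S) →
    (∀ a ∈ S, ∀ b ∈ S, ∀ c, h.tri a b = .inr c → c ∈ S) → S = Set.univ

end Hole

section MooreFibre

variable {X V A : Type*} [Fintype X] [Fintype A]

/-- The subsystem `X ∪ ({v} × A)` of Moore's construction. -/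
def mooreFibre (X A : Type*) [Fintype X] [Fintype A] (v : V) : Finset (X ⊕ V × A) :=
  univ.disjSum (univ.image fun a => (v, a))

@[simp] lemma inl_mem_mooreFibre (v : V) (x : X) : .inl x ∈ mooreFibre X A v := by
  simp [mooreFibre]

@[simp] lemma inr_mem_mooreFibre (v w : V) (a : A) :
    .inr (w, a) ∈ mooreFibre X A v ↔ v = w := by
  simp [mooreFibre]

lemma card_mooreFibre (v : V) :
    (mooreFibre X A v).card = Fintype.card X + Fintype.card A := by
  rw [mooreFibre, card_disjSum, card_image_of_injective _ (Prod.mk_right_injective v)]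
  rfl

end MooreFibre

section Fibre

variable {X V A : Type*} [Fintype A]

/-- The points of `S` in the fibre over `v`. -/
def fibre (S : Finset (X ⊕ V × A)) (v : V) : Finset A :=
  univ.filter fun a => .inr (v, a) ∈ S

lemma card_eq_sum_fibre [Fintype V] (S : Finset (X ⊕ V × A)) :
    S.card = S.toLeft.card + ∑ v, (fibre S v).card := by
  rw [← card_toLeft_add_card_toRight]
  congr 1
  rw [card_eq_sum_card_fiberwise (f := Prod.fst) (t := univ) (by simp)]
  refine sum_congr rfl fun v _ => ?_
  rw [← card_image_of_injective (fibre S v) (Prod.mk_right_injective v)]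
  congr 1
  ext ⟨w, a⟩
  simp only [mem_filter, mem_toRight, mem_image, fibre, mem_univ, true_and, Prod.mk.injEq]
  constructor
  · rintro ⟨h, rfl⟩
    exact ⟨a, h, rfl, rfl⟩
  · rintro ⟨b, h, rfl, rfl⟩
    exact ⟨h, rfl⟩

end Fibre

section Moore

variable {X V A κ : Type*} [AddCommGroup A]

/-- Moore's construction on `X ∪ (V × A)`, where the system on `X ∪ ({v} × A)` depends on the
colour of `v`. -/
def mooreQuasigroup (SX : SteinerQuasigroup X) (SV : SteinerQuasigroup V) (H : κ → Hole X A)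
    (col : V → κ) : SteinerQuasigroup (X ⊕ V × A) where
  op
    | .inl x, .inl y => .inl (SX.op x y)
    | .inl x, .inr (v, a) => .inr (v, (H (col v)).pt x a)
    | .inr (v, a), .inl x => .inr (v, (H (col v)).pt x a)
    | .inr (v, a), .inr (w, b) =>
      if v = w then ((H (col v)).tri a b).map id fun c => (v, c) else .inr (SV.op v w, -a - b)
  op_self p := by
    rcases p with x | ⟨v, a⟩
    · simp [SX.op_self]
    · simp [Hole.tri_self]
  op_comm p q := by
    rcases p with x | ⟨v, a⟩ <;> rcases q with y | ⟨w, b⟩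
    · simp [SX.op_comm x y]
    · rfl
    · rfl
    · by_cases h : v = w
      · subst h
        simp [(H (col v)).tri_comm a b]
      · have h' : w ≠ v := Ne.symm h
        simp only [h, h', if_false, SV.op_comm v w]
        congr 2
        abel
  op_op p q := by
    rcases p with x | ⟨v, a⟩ <;> rcases q with y | ⟨w, b⟩
    · simp [SX.op_op]
    · simp [Hole.pt_pt]
    · simp [Hole.tri_pt]
    · by_cases h : v = w
      · subst h
        rcases hc : (H (col v)).tri a b with x | c
        · simp [hc, (H (col v)).pt_tri _ _ _ hc]
        · simp [hc, (H (col v)).tri_inr _ _ _ hc]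
      · simp [h, (SV.op_ne_left h).symm, SV.op_op]

variable {SX : SteinerQuasigroup X} {SV : SteinerQuasigroup V} {H : κ → Hole X A} {col : V → κ}

@[simp] lemma moore_inl_inl (x y : X) :
    (mooreQuasigroup SX SV H col).op (.inl x) (.inl y) = .inl (SX.op x y) := rfl

@[simp] lemma moore_inl_inr (x : X) (v : V) (a : A) :
    (mooreQuasigroup SX SV H col).op (.inl x) (.inr (v, a)) =
      .inr (v, (H (col v)).pt x a) := rfl

@[simp] lemma moore_inr_inl (x : X) (v : V) (a : A) :
    (mooreQuasigroup SX SV H col).op (.inr (v, a)) (.inl x) =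
      .inr (v, (H (col v)).pt x a) := rfl

@[simp] lemma moore_inr_inr_self (v : V) (a b : A) :
    (mooreQuasigroup SX SV H col).op (.inr (v, a)) (.inr (v, b)) =
      ((H (col v)).tri a b).map id fun c => (v, c) := if_pos rfl

lemma moore_inr_inr {v w : V} (h : v ≠ w) (a b : A) :
    (mooreQuasigroup SX SV H col).op (.inr (v, a)) (.inr (w, b)) = .inr (SV.op v w, -a - b) :=
  if_neg h

lemma mooreFibre_closed [Fintype X] [Fintype A] {v : V} {p q : X ⊕ V × A}
    (hp : p ∈ mooreFibre X A v)
    (hq : q ∈ mooreFibre X A v) : (mooreQuasigroup SX SV H col).op p q ∈ mooreFibre X A v := by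
  rcases p with x | ⟨w, a⟩ <;> rcases q with y | ⟨w', b⟩
  · simp
  · simpa using hq
  · simpa using hp
  · obtain rfl := (inr_mem_mooreFibre _ _ _).1 hp
    obtain rfl := (inr_mem_mooreFibre _ _ _).1 hq
    rw [moore_inr_inr_self]
    rcases (H (col v)).tri a b with x | c <;> simp

lemma inr_mem_of_closed {S : Finset (X ⊕ V × A)}
    (hS : ∀ p ∈ S, ∀ q ∈ S, (mooreQuasigroup SX SV H col).op p q ∈ S) {v w : V} (hvw : v ≠ w)
    {p p' b : A} (hp : .inr (v, p) ∈ S)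
    (hp' : .inr (v, p') ∈ S) (hb : .inr (w, b) ∈ S) : .inr (w, p - p' + b) ∈ S := by
  have h1 := hS _ hp _ hb
  rw [moore_inr_inr hvw] at h1
  have h2 := hS _ hp' _ h1
  rw [moore_inr_inr (SV.op_ne_left hvw).symm, SV.op_op] at h2
  convert h2 using 3
  abel

/-- Each fibre of a closed set is a union of cosets of a large subgroup. -/
lemma fibre_eq_univ [Fintype V] [Fintype A] {S : Finset (X ⊕ V × A)}
    (hS : ∀ p ∈ S, ∀ q ∈ S, (mooreQuasigroup SX SV H col).op p q ∈ S)
    (hH : ∀ k, (H k).Generating (Fintype.card V)) {v w : V} (hvw : v ≠ w) {p b : A}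
    (hp : .inr (v, p) ∈ S) (hb : .inr (w, b) ∈ S)
    (hc : Fintype.card A ≤ Fintype.card V * (fibre S v).card) (a : A) : .inr (w, a) ∈ S := by
  let K : AddSubgroup A :=
    { carrier := {h | ∀ s, .inr (w, s) ∈ S ↔ .inr (w, h + s) ∈ S}
      zero_mem' := fun s => by simp
      add_mem' := fun {g h} hg hh s => by rw [hh s, hg (h + s), add_assoc]
      neg_mem' := fun {g} hg s => by rw [hg (-g + s), add_neg_cancel_left] }
  have hK : ∀ p' ∈ fibre S v, p' - p ∈ K := by
    intro p' hp' s
    simp only [fibre, mem_filter, mem_univ, true_and] at hp'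
    refine ⟨fun hs => inr_mem_of_closed hS hvw hp' hp hs, fun hs => ?_⟩
    have := inr_mem_of_closed hS hvw hp hp' hs
    rwa [← add_assoc, sub_add_sub_cancel, sub_self, zero_add] at this
  have hcard : (fibre S v).card ≤ Nat.card K := by
    rw [Nat.card_eq_fintype_card, ← Fintype.card_coe]
    refine Fintype.card_le_of_injective (fun x => (⟨x.1 - p, hK _ x.2⟩ : K)) fun x y hxy => ?_
    exact Subtype.ext (sub_left_injective (congrArg Subtype.val hxy))
  have hindex : K.index ≤ Fintype.card V := by
    have h1 := K.card_mul_index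
    rw [Nat.card_eq_fintype_card (α := A)] at h1
    have h2 : 0 < Nat.card K := Nat.card_pos
    refine Nat.le_of_mul_le_mul_left ?_ h2
    calc Nat.card K * K.index = Fintype.card A := h1
      _ ≤ Fintype.card V * (fibre S v).card := hc
      _ ≤ Fintype.card V * Nat.card K := Nat.mul_le_mul_left _ hcard
      _ = Nat.card K * Fintype.card V := Nat.mul_comm _ _
  have := hH (col w) K hindex {s | (.inr (w, s) : X ⊕ V × A) ∈ S} ⟨b, hb⟩
    (fun k hk s hs => (hk s).1 hs) ?_
  · exact (Set.eq_univ_iff_forall.1 this) a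
  · intro s hs t ht c hst
    have := hS _ hs _ ht
    rw [moore_inr_inr_self, hst] at this
    exact this

/-- The fibres are the only subsystems of their size. -/
theorem exists_eq_mooreFibre [Fintype X] [Fintype V] [Nonempty V] [Fintype A]
    {S : Finset (X ⊕ V × A)}
    (hS : ∀ p ∈ S, ∀ q ∈ S, (mooreQuasigroup SX SV H col).op p q ∈ S)
    (hH : ∀ k, (H k).Generating (Fintype.card V))
    (hX : Fintype.card X < 2 * Fintype.card A)
    (hcard : S.card = Fintype.card X + Fintype.card A) : ∃ v, S = mooreFibre X A v := by
  have key : ∀ v, S ⊆ mooreFibre X A v → ∃ v, S = mooreFibre X A v := fun v hv =>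
    ⟨v, eq_of_subset_of_card_le hv (by rw [card_mooreFibre, hcard])⟩
  have hsum : Fintype.card A ≤ ∑ v, (fibre S v).card := by
    have h1 := card_eq_sum_fibre S
    have h2 : S.toLeft.card ≤ Fintype.card X := card_le_univ _
    omega
  obtain ⟨v, hv⟩ : ∃ v, Fintype.card A ≤ Fintype.card V * (fibre S v).card := by
    by_contra! hlt
    have h1 : ∑ v, Fintype.card V * (fibre S v).card < ∑ _v : V, Fintype.card A :=
      sum_lt_sum_of_nonempty univ_nonempty fun v _ => hlt v
    rw [← mul_sum, sum_const, smul_eq_mul, card_univ] at h1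
    exact absurd (Nat.lt_of_mul_lt_mul_left h1) (not_lt.2 hsum)
  by_cases hvne : ∃ w ≠ v, ∃ b, .inr (w, b) ∈ S
  · obtain ⟨w, hw, b, hb⟩ := hvne
    have hA : 0 < Fintype.card A := by omega
    have hpos : 0 < (fibre S v).card := by
      by_contra! h0
      rw [Nat.le_zero.1 h0] at hv
      omega
    obtain ⟨p, hp⟩ := card_pos.1 hpos
    have hp : .inr (v, p) ∈ S := by simpa [fibre] using hp
    have hfull : ∀ {w}, (∀ a, .inr (w, a) ∈ S) → (fibre S w).card = Fintype.card A := by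
      intro w hw
      rw [← card_univ]
      congr 1
      ext a
      simp [fibre, hw a]
    have hVpos : 0 < Fintype.card V := Fintype.card_pos
    have hle : ∀ {w}, (fibre S w).card = Fintype.card A →
        Fintype.card A ≤ Fintype.card V * (fibre S w).card := fun {w} h => by
      rw [h]
      exact Nat.le_mul_of_pos_left _ hVpos
    have hwS := fibre_eq_univ hS hH (Ne.symm hw) hp hb hv
    have hvS := fibre_eq_univ hS hH hw hb hp (hle (hfull hwS))
    have hz := hS _ hp _ hb
    rw [moore_inr_inr (Ne.symm hw)] at hz
    have hzv := SV.op_ne_left (Ne.symm hw)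
    have hzw := SV.op_ne_right (Ne.symm hw)
    have hzS := fibre_eq_univ hS hH hzv.symm hp hz hv
    have h3 : ∑ u ∈ {v, w, SV.op v w}, (fibre S u).card ≤ ∑ u, (fibre S u).card :=
      sum_le_sum_of_subset (subset_univ _)
    rw [sum_insert (by simp [Ne.symm hw, hzv.symm]), sum_insert (by simp [hzw.symm]),
      sum_singleton, hfull hvS, hfull hwS, hfull hzS] at h3
    have h1 := card_eq_sum_fibre S
    omega
  · push Not at hvne
    refine key v fun p hp => ?_
    rcases p with x | ⟨w, b⟩
    · simp
    · rw [inr_mem_mooreFibre]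
      by_contra hne
      exact hvne w (Ne.symm hne) b hp

end Moore

section MooreAut

variable {X V A κ : Type*} [AddCommGroup A] [Fintype X] [Fintype V] [Fintype A]
  {SX : SteinerQuasigroup X} {SV : SteinerQuasigroup V} {H : κ → Hole X A} {col : V → κ}

/-- Automorphisms of Moore's construction preserve `X` and permute the fibres. -/
theorem exists_fibrewise [Nontrivial V] (hH : ∀ k, (H k).Generating (Fintype.card V))
    (hX : Fintype.card X < 2 * Fintype.card A) {Φ : Equiv.Perm (X ⊕ V × A)}
    (hΦ : Φ ∈ (mooreQuasigroup SX SV H col).autSubgroup) :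
    ∃ (ρ : X → X) (g : Equiv.Perm V) (f : V → Equiv.Perm A), Function.Injective ρ ∧
      (∀ x, Φ (.inl x) = .inl (ρ x)) ∧ ∀ v a, Φ (.inr (v, a)) = .inr (g v, f v a) := by
  have hA : Nonempty A := ⟨0⟩
  have himage : ∀ v, ∃ w, (mooreFibre X A v).image Φ = mooreFibre X A w := by
    intro v
    refine exists_eq_mooreFibre (SX := SX) (SV := SV) (H := H) (col := col) ?_ hH hX ?_
    · intro p hp q hq
      obtain ⟨p', hp', rfl⟩ := mem_image.1 hp
      obtain ⟨q', hq', rfl⟩ := mem_image.1 hq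
      rw [← hΦ]
      exact mem_image_of_mem _ (mooreFibre_closed hp' hq')
    · rw [card_image_of_injective _ Φ.injective, card_mooreFibre]
  choose g hg using himage
  have hmem : ∀ v p, p ∈ mooreFibre X A v → Φ p ∈ mooreFibre X A (g v) := fun v p hp => by
    rw [← hg]
    exact mem_image_of_mem _ hp
  have hginj : Function.Injective g := by
    intro v w hvw
    have h1 : mooreFibre X A v = mooreFibre X A w :=
      image_injective Φ.injective (by rw [hg, hg, hvw])
    have h2 : .inr (w, 0) ∈ mooreFibre X A v := by rw [h1]; simp
    simpa using h2
  have hinl : ∀ x, ∃ y, Φ (.inl x) = .inl y := by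
    intro x
    obtain ⟨v, w, hvw⟩ := exists_pair_ne V
    have h1 := hmem v (.inl x) (by simp)
    have h2 := hmem w (.inl x) (by simp)
    rcases hp : Φ (.inl x) with y | ⟨u, a⟩
    · exact ⟨y, rfl⟩
    · rw [hp, inr_mem_mooreFibre] at h1 h2
      exact absurd (hginj (h1.trans h2.symm)) hvw
  choose ρ hρ using hinl
  have hρinj : Function.Injective ρ := fun x y hxy =>
    Sum.inl_injective (Φ.injective (by rw [hρ, hρ, hxy]))
  have hρsurj : Function.Surjective ρ := Finite.surjective_of_injective hρinj
  have hinr : ∀ v a, ∃ b, Φ (.inr (v, a)) = .inr (g v, b) := by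
    intro v a
    rcases hp : Φ (.inr (v, a)) with y | ⟨u, b⟩
    · obtain ⟨x, rfl⟩ := hρsurj y
      rw [← hρ] at hp
      exact absurd (Φ.injective hp) (by simp)
    · have h1 := hmem v (.inr (v, a)) (by simp)
      rw [hp, inr_mem_mooreFibre] at h1
      exact ⟨b, by rw [h1]⟩
  choose f hf using hinr
  have hfinj : ∀ v, Function.Injective (f v) := fun v a b hab => by
    have : (.inr (v, a) : X ⊕ V × A) = .inr (v, b) := Φ.injective (by rw [hf, hf, hab])
    simpa using this
  refine ⟨ρ, Equiv.ofBijective g (Finite.injective_iff_bijective.1 hginj),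
    fun v => Equiv.ofBijective (f v) (Finite.injective_iff_bijective.1 (hfinj v)), hρinj, hρ, ?_⟩
  simpa using hf

/-- If the systems on the fibres are rigid and pairwise non-isomorphic (with respect to affine
bijections), then the automorphisms of Moore's construction are given by the colour preserving
automorphisms of `V`. -/
theorem exists_moore_aut [Nontrivial V] (hH : ∀ k, (H k).Generating (Fintype.card V))
    (hX : Fintype.card X < 2 * Fintype.card A)
    (hrigid : ∀ k l (f : Equiv.Perm A) (ρ : X → X), Function.Injective ρ →
      (∀ a b, f (a + b) + f 0 = f a + f b) →
      (∀ a b, (H l).tri (f a) (f b) = ((H k).tri a b).map ρ f) → k = l ∧ f = 1)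
    {Φ : Equiv.Perm (X ⊕ V × A)} (hΦ : Φ ∈ (mooreQuasigroup SX SV H col).autSubgroup) :
    ∃ g ∈ SV.autSubgroup, (∀ v, col (g v) = col v) ∧
      Φ = (Equiv.refl X).sumCongr (g.prodCongr (Equiv.refl A)) := by
  obtain ⟨ρ, g, f, hρ, hl, hr⟩ := exists_fibrewise hH hX hΦ
  have hsum : ∀ v w, v ≠ w → ∀ a b, g (SV.op v w) = SV.op (g v) (g w) ∧
      f (SV.op v w) (-a - b) = -f v a - f w b := by
    intro v w hvw a b
    have h1 := hΦ (.inr (v, a)) (.inr (w, b))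
    rw [moore_inr_inr hvw, hr, hr, hr, moore_inr_inr (g.injective.ne hvw)] at h1
    simpa using h1
  have htri : ∀ v a b, (H (col (g v))).tri (f v a) (f v b) = ((H (col v)).tri a b).map ρ (f v) := by
    intro v a b
    have h1 := hΦ (.inr (v, a)) (.inr (v, b))
    rw [hr, hr, moore_inr_inr_self, moore_inr_inr_self] at h1
    rcases h2 : (H (col v)).tri a b with x | c <;>
      rcases h3 : (H (col (g v))).tri (f v a) (f v b) with y | d <;>
      simp_all
  have haff : ∀ v a b, f v (a + b) + f v 0 = f v a + f v b := by
    intro v a b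
    obtain ⟨w, hw⟩ := exists_ne v
    have h1 := (hsum v w (Ne.symm hw) (a + b) 0).2
    have h2 := (hsum v w (Ne.symm hw) a b).2
    have h3 := (hsum v w (Ne.symm hw) 0 b).2
    have h4 := (hsum v w (Ne.symm hw) b 0).2
    rw [show -(a + b) - 0 = -a - b by abel, h2] at h1
    rw [show -0 - b = -b - 0 by abel, h4] at h3
    have h5 : f v (a + b) = f v a + f w b - f w 0 := by
      rw [eq_sub_iff_add_eq]
      simpa [add_comm] using congrArg Neg.neg h1.symm
    have h6 : f v b = f v 0 + f w b - f w 0 := by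
      rw [eq_sub_iff_add_eq]
      simpa [add_comm] using congrArg Neg.neg h3
    rw [h5, h6]
    abel
  have hall := fun v => hrigid (col v) (col (g v)) (f v) ρ hρ (haff v) (htri v)
  refine ⟨g, fun v w => ?_, fun v => ((hall v).1).symm, ?_⟩
  · by_cases hvw : v = w
    · simp [hvw, SV.op_self]
    · exact (hsum v w hvw 0 0).1
  · ext p
    rcases p with x | ⟨v, a⟩
    · obtain ⟨v⟩ : Nonempty V := inferInstance
      have h1 := htri v 0 ((H (col v)).pt x 0)
      rw [(hall v).2, ← (hall v).1, Hole.tri_pt] at h1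
      simp only [Equiv.Perm.coe_one, id_eq, Hole.tri_pt, Sum.map_inl, Sum.inl.injEq] at h1
      simp [hl, ← h1]
    · simp [hr, (hall v).2]

/-- If the colour preserving automorphisms of `V` form a faithful action of `G`, then Moore's
construction has automorphism group `G`. -/
theorem nonempty_mulEquiv_moore_aut {G : Type*} [Group G] [MulAction G V] [FaithfulSMul G V]
    [Nontrivial V] (hH : ∀ k, (H k).Generating (Fintype.card V))
    (hX : Fintype.card X < 2 * Fintype.card A)
    (hrigid : ∀ k l (f : Equiv.Perm A) (ρ : X → X), Function.Injective ρ →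
      (∀ a b, f (a + b) + f 0 = f a + f b) →
      (∀ a b, (H l).tri (f a) (f b) = ((H k).tri a b).map ρ f) → k = l ∧ f = 1)
    (hop : ∀ (h : G) v w, h • SV.op v w = SV.op (h • v) (h • w))
    (hcol : ∀ (h : G) v, col (h • v) = col v)
    (hall : ∀ g ∈ SV.autSubgroup, (∀ v, col (g v) = col v) → ∃ h : G, ∀ v, g v = h • v) :
    Nonempty (G ≃* (mooreQuasigroup SX SV H col).autSubgroup) := by
  let F : G →* (mooreQuasigroup SX SV H col).autSubgroup :=
    { toFun := fun h => ⟨(Equiv.refl X).sumCongr ((MulAction.toPerm h).prodCongr (Equiv.refl A)), by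
        rintro (x | ⟨v, a⟩) (y | ⟨w, b⟩)
        · simp
        · simp [hcol]
        · simp [hcol]
        · by_cases hvw : v = w
          · subst hvw
            rcases hc : (H (col v)).tri a b with x | c <;> simp [hcol, hc]
          · have : h • v ≠ h • w := (MulAction.injective h).ne hvw
            simp [moore_inr_inr hvw, moore_inr_inr this, hop]⟩
      map_one' := by
        ext p
        rcases p with x | ⟨v, a⟩ <;> simp
      map_mul' := fun g h => by
        ext p
        rcases p with x | ⟨v, a⟩ <;> simp [mul_smul] }
  refine ⟨MulEquiv.ofBijective F ⟨fun g h hgh => ?_, fun Φ => ?_⟩⟩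
  · refine FaithfulSMul.eq_of_smul_eq_smul (α := V) fun v => ?_
    have h1 := congrArg (fun Ψ => Ψ.1 (.inr (v, 0))) hgh
    simpa [F] using h1
  · obtain ⟨g, hg, hc, h1⟩ := exists_moore_aut hH hX hrigid Φ.2
    obtain ⟨h, hh⟩ := hall g hg hc
    refine ⟨h, Subtype.ext ?_⟩
    rw [h1]
    ext p
    rcases p with x | ⟨v, a⟩ <;> simp [F, hh]

end MooreAut

namespace Hole

/-- A hole system from a relation `tri` describing the triples outside `X` and a relation `lab`
describing the triples meeting `X`. -/
def ofRel {X A : Type*} (lab : X → A → A → Prop) (tri : A → A → A → Prop)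
    (lab_symm : ∀ x a b, lab x a b → lab x b a)
    (tri_symm : ∀ a b c, tri a b c → tri b a c)
    (tri_symm' : ∀ a b c, tri a b c → tri a c b)
    (tri_ne : ∀ a b c, tri a b c → a ≠ b) (lab_ne : ∀ x a b, lab x a b → a ≠ b)
    (tri_unique : ∀ a b c c', tri a b c → tri a b c' → c = c')
    (lab_unique : ∀ x y a b, lab x a b → lab y a b → x = y)
    (not_lab : ∀ x a b c, tri a b c → ¬ lab x a b)
    (cover : ∀ a b, a ≠ b → (∃ c, tri a b c) ∨ ∃ x, lab x a b)
    (matching : ∀ x a, ∃! b, lab x a b) : Hole X A where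
  tri a b :=
    if h : ∃ c, tri a b c then .inr h.choose
    else if h : ∃ x, lab x a b then .inl h.choose else .inr a
  pt x a := (matching x a).choose
  tri_self a := by
    rw [dif_neg fun ⟨c, hc⟩ => tri_ne _ _ _ hc rfl, dif_neg fun ⟨x, hx⟩ => lab_ne _ _ _ hx rfl]
  tri_comm a b := by
    by_cases h : ∃ c, tri a b c
    · have h' : ∃ c, tri b a c := h.imp fun c => tri_symm _ _ _
      rw [dif_pos h, dif_pos h',
        tri_unique _ _ _ _ h.choose_spec (tri_symm _ _ _ h'.choose_spec)]
    · have h' : ¬ ∃ c, tri b a c := fun h' => h (h'.imp fun c => tri_symm _ _ _)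
      rw [dif_neg h, dif_neg h']
      by_cases h2 : ∃ x, lab x a b
      · have h2' : ∃ x, lab x b a := h2.imp fun x => lab_symm _ _ _
        rw [dif_pos h2, dif_pos h2',
          lab_unique _ _ _ _ h2.choose_spec (lab_symm _ _ _ h2'.choose_spec)]
      · have h2' : ¬ ∃ x, lab x b a := fun h' => h2 (h'.imp fun c => lab_symm _ _ _)
        rw [dif_neg h2, dif_neg h2']
        by_contra hab
        exact (cover a b fun e => hab (by rw [e])).elim h h2
  tri_inr a b c hc := by
    by_cases h : ∃ c, tri a b c
    · rw [dif_pos h, Sum.inr.injEq] at hc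
      have h1 := h.choose_spec
      rw [hc] at h1
      have h' : ∃ b, tri a c b := ⟨b, tri_symm' _ _ _ h1⟩
      rw [dif_pos h', tri_unique _ _ _ _ h'.choose_spec (tri_symm' _ _ _ h1)]
    · rw [dif_neg h] at hc
      by_cases h2 : ∃ x, lab x a b
      · rw [dif_pos h2] at hc
        exact absurd hc (by simp)
      · rw [dif_neg h2, Sum.inr.injEq] at hc
        subst hc
        rw [dif_neg fun ⟨c, hc⟩ => tri_ne _ _ _ hc rfl, dif_neg fun ⟨x, hx⟩ => lab_ne _ _ _ hx rfl]
        by_contra hab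
        exact (cover a b fun e => hab (by rw [e])).elim h h2
  tri_pt x a := by
    have h1 : lab x a _ := (matching x a).choose_spec.1
    have h2 : ∃ y, lab y a (matching x a).choose := ⟨x, h1⟩
    rw [dif_neg fun ⟨c, hc⟩ => not_lab _ _ _ _ hc h1, dif_pos h2,
      lab_unique _ _ _ _ h2.choose_spec h1]
  pt_tri x a b hx := by
    by_cases h : ∃ c, tri a b c
    · rw [dif_pos h] at hx
      exact absurd hx (by simp)
    · rw [dif_neg h] at hx
      by_cases h2 : ∃ x, lab x a b
      · rw [dif_pos h2, Sum.inl.injEq] at hx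
        have h3 := h2.choose_spec
        rw [hx] at h3
        exact ((matching x a).choose_spec.2 b h3).symm
      · rw [dif_neg h2] at hx
        exact absurd hx (by simp)

/-- The system `h` consists of the triples described by `lab` and `tri`. -/
structure HasRel {X A : Type*} (h : Hole X A) (lab : X → A → A → Prop)
    (tri : A → A → A → Prop) : Prop where
  tri_eq_inr : ∀ {a b c}, tri a b c → h.tri a b = .inr c
  tri_eq_inl : ∀ {x a b}, lab x a b → h.tri a b = .inl x
  of_tri_eq_inl : ∀ {x a b}, h.tri a b = .inl x → lab x a b
  of_tri_eq_inr : ∀ {a b c}, a ≠ b → h.tri a b = .inr c → tri a b c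

theorem exists_hasRel {X A : Type*} (lab : X → A → A → Prop) (tri : A → A → A → Prop)
    (lab_symm : ∀ x a b, lab x a b → lab x b a)
    (tri_symm : ∀ a b c, tri a b c → tri b a c)
    (tri_symm' : ∀ a b c, tri a b c → tri a c b)
    (tri_ne : ∀ a b c, tri a b c → a ≠ b) (lab_ne : ∀ x a b, lab x a b → a ≠ b)
    (tri_unique : ∀ a b c c', tri a b c → tri a b c' → c = c')
    (lab_unique : ∀ x y a b, lab x a b → lab y a b → x = y)
    (not_lab : ∀ x a b c, tri a b c → ¬ lab x a b)
    (cover : ∀ a b, a ≠ b → (∃ c, tri a b c) ∨ ∃ x, lab x a b)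
    (matching : ∀ x a, ∃! b, lab x a b) : ∃ h : Hole X A, h.HasRel lab tri := by
  let h := ofRel lab tri lab_symm tri_symm tri_symm' tri_ne lab_ne tri_unique lab_unique not_lab
    cover matching
  have h1 : ∀ {a b c}, tri a b c → h.tri a b = .inr c := by
    intro a b c hc
    have h' : ∃ c, tri a b c := ⟨c, hc⟩
    change dite _ _ _ = _
    rw [dif_pos h', tri_unique _ _ _ _ h'.choose_spec hc]
  have h2 : ∀ {x a b}, lab x a b → h.tri a b = .inl x := by
    intro x a b hx
    have h' : ∃ x, lab x a b := ⟨x, hx⟩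
    change dite _ _ _ = _
    rw [dif_neg fun ⟨c, hc⟩ => not_lab _ _ _ _ hc hx, dif_pos h',
      lab_unique _ _ _ _ h'.choose_spec hx]
  refine ⟨h, h1, h2, fun {x a b} hx => ?_, fun {a b c} hab hc => ?_⟩
  · have hab : a ≠ b := by
      rintro rfl
      rw [h.tri_self] at hx
      exact absurd hx (by simp)
    rcases cover a b hab with ⟨c, hc⟩ | ⟨y, hy⟩
    · rw [h1 hc] at hx
      exact absurd hx (by simp)
    · rw [h2 hy, Sum.inl.injEq] at hx
      rwa [← hx]
  · rcases cover a b hab with ⟨c', hc'⟩ | ⟨y, hy⟩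
    · rw [h1 hc', Sum.inr.injEq] at hc
      rwa [← hc]
    · rw [h2 hy] at hc
      exact absurd hc (by simp)

end Hole

/-- Data describing a hole system on `ZMod 2 × Z` built from the difference triangles
`{(ε, i), (ε, i + δ), (ε + 1, i + e)}` for `(δ, e) ∈ E`, from the prisms with pure difference `d`
and mixed difference `em d` for `Q d`, whose three perfect matchings are given by `γ`, and from the
remaining mixed differences. -/
structure PrismData (Z : Type*) [AddCommGroup Z] where
  /-- The pure and mixed differences of the triangles. -/
  E : Finset (Z × Z)
  /-- The pure differences of the prisms. -/
  Q : Z → Prop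
  /-- The proper edge colouring of the cycles of pure difference `d`. -/
  γ : Z → Z → ZMod 3
  /-- The mixed difference of the prism with pure difference `d`. -/
  em : Z → Z
  E_neg : ∀ {δ e}, (δ, e) ∈ E → (-δ, e - δ) ∈ E
  E_fun : ∀ {δ e e'}, (δ, e) ∈ E → (δ, e') ∈ E → e = e'
  E_inj : ∀ {δ δ' e}, (δ, e) ∈ E → (δ', e) ∈ E → δ = δ'
  E_mixed : ∀ {δ δ' e}, (δ, e) ∈ E → (δ', -e) ∉ E
  E_ne : ∀ {δ e}, (δ, e) ∈ E → δ ≠ 0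
  Q_ne : ∀ {d}, Q d → d ≠ 0
  Q_neg : ∀ {d}, Q d → ¬ Q (-d)
  Q_not_E : ∀ {d e}, Q d → (d, e) ∉ E
  cover : ∀ d, d ≠ 0 → (∃ e, (d, e) ∈ E) ∨ Q d ∨ Q (-d)
  γ_ne : ∀ {d}, Q d → ∀ i, γ d i ≠ γ d (i + d)
  em_inj : ∀ {d d'}, Q d → Q d' → em d = em d' → d = d'
  em_ne : ∀ {d δ e}, Q d → (δ, e) ∈ E → em d ≠ e
  em_ne_neg : ∀ {d δ e}, Q d → (δ, e) ∈ E → em d ≠ -e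

namespace PrismData

lemma zmod_two_ne (x : ZMod 2) : x ≠ x + 1 := by revert x; decide

lemma zmod_two_add (x : ZMod 2) : x + 1 + 1 = x := by revert x; decide

lemma zmod_two_cases (x y : ZMod 2) : y = x ∨ y = x + 1 := by revert x y; decide

variable {Z : Type*} [AddCommGroup Z]

/-- The projection to the second coordinate, shifted by `s` on the second copy of `Z`. -/
def proj (s : Z) (a : ZMod 2 × Z) : Z := if a.1 = 0 then a.2 else a.2 - s

/-- The mixed difference of two points in different copies of `Z`. -/
def mixed (a b : ZMod 2 × Z) : Z := if a.1 = 0 then b.2 - a.2 else a.2 - b.2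

lemma proj_sub {a b : ZMod 2 × Z} (h : b.1 = a.1) (s : Z) :
    proj s b - proj s a = b.2 - a.2 := by
  unfold proj
  rw [h]
  split_ifs <;> abel

lemma proj_eq_iff {a b : ZMod 2 × Z} (h : b.1 = a.1 + 1) (s : Z) :
    proj s b = proj s a ↔ s = mixed a b := by
  unfold proj mixed
  have : ∀ x : ZMod 2, x = 0 ∨ x = 1 := by decide
  have h2 : (1 : ZMod 2) + 1 = 0 := by decide
  rcases this a.1 with h1 | h1
  · rw [h1, zero_add] at h
    simp only [h, h1, if_true, one_ne_zero, if_false]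
    grind
  · rw [h1, h2] at h
    simp only [h, h1, if_true, one_ne_zero, if_false]
    grind

lemma mixed_cases (a b : ZMod 2 × Z) : mixed a b = b.2 - a.2 ∨ mixed a b = -(b.2 - a.2) := by
  unfold mixed
  split_ifs <;> simp

variable (P : PrismData Z)

/-- `a`, `b` lie in the same copy of `Z` and form a triangle with `c`. -/
def Tri₀ (a b c : ZMod 2 × Z) : Prop :=
  b.1 = a.1 ∧ c.1 = a.1 + 1 ∧ (b.2 - a.2, c.2 - a.2) ∈ P.E

/-- The points `a`, `b`, `c` form a triangle. -/
def Tri (a b c : ZMod 2 × Z) : Prop := P.Tri₀ a b c ∨ P.Tri₀ a c b ∨ P.Tri₀ b c a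

/-- The edge `a b` is in the matching of the prism of difference `d` with colour `k`. -/
def PrismEdge (d : Z) (k : ZMod 3) (a b : ZMod 2 × Z) : Prop :=
  P.Q d ∧ ((b.1 = a.1 ∧ proj (P.em d) b = proj (P.em d) a + d ∧ P.γ d (proj (P.em d) a) = k) ∨
    (b.1 = a.1 ∧ proj (P.em d) a = proj (P.em d) b + d ∧ P.γ d (proj (P.em d) b) = k) ∨
    (b.1 = a.1 + 1 ∧ proj (P.em d) b = proj (P.em d) a ∧
      P.γ d (proj (P.em d) a) + P.γ d (proj (P.em d) a - d) + k = 0))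

/-- The mixed differences occurring neither in triangles nor in prisms. -/
def FreeMixed (e : Z) : Prop :=
  (∀ δ, (δ, e) ∉ P.E) ∧ (∀ δ, (δ, -e) ∉ P.E) ∧ ∀ d, P.Q d → e ≠ P.em d

/-- The edge `a b` has the mixed difference `e`. -/
def MixedEdge (e : Z) (a b : ZMod 2 × Z) : Prop :=
  P.FreeMixed e ∧ b.1 = a.1 + 1 ∧ proj e b = proj e a

/-- The edges of the matching labelled by `l`. -/
def Edge : (Z × ZMod 3) ⊕ Z → ZMod 2 × Z → ZMod 2 × Z → Prop
  | .inl (d, k) => P.PrismEdge d k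
  | .inr e => P.MixedEdge e

/-- The labels of nonempty matchings. -/
def Valid : (Z × ZMod 3) ⊕ Z → Prop
  | .inl (d, _) => P.Q d
  | .inr e => P.FreeMixed e

variable {P}

lemma Tri₀.symm {a b c : ZMod 2 × Z} (h : P.Tri₀ a b c) : P.Tri₀ b a c := by
  refine ⟨h.1.symm, by rw [h.1, h.2.1], ?_⟩
  have := P.E_neg h.2.2
  rwa [neg_sub, sub_sub_sub_cancel_right] at this

lemma Tri.symm {a b c : ZMod 2 × Z} (h : P.Tri a b c) : P.Tri b a c := by
  rcases h with h | h | h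
  · exact .inl h.symm
  · exact .inr (.inr h)
  · exact .inr (.inl h)

lemma Tri.symm' {a b c : ZMod 2 × Z} (h : P.Tri a b c) : P.Tri a c b := by
  rcases h with h | h | h
  · exact .inr (.inl h)
  · exact .inl h
  · exact .inr (.inr h.symm)

lemma Tri₀.ne {a b c : ZMod 2 × Z} (h : P.Tri₀ a b c) : a ≠ b := by
  rintro rfl
  exact P.E_ne h.2.2 (sub_self _)

lemma Tri₀.ne' {a b c : ZMod 2 × Z} (h : P.Tri₀ a b c) : a ≠ c := by
  rintro rfl
  exact zmod_two_ne _ h.2.1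

lemma Tri.ne {a b c : ZMod 2 × Z} (h : P.Tri a b c) : a ≠ b := by
  rcases h with h | h | h
  · exact h.ne
  · exact h.ne'
  · exact h.ne'.symm

lemma Tri.unique {a b c c' : ZMod 2 × Z} (h : P.Tri a b c) (h' : P.Tri a b c') : c = c' := by
  have flip : ∀ {x y : ZMod 2}, x = y + 1 → y = x + 1 := fun h => by rw [h, zmod_two_add]
  rcases h with h | h | h <;> rcases h' with h' | h' | h'
  · exact Prod.ext (h.2.1.trans h'.2.1.symm) (sub_left_injective (P.E_fun h.2.2 h'.2.2))
  · exact absurd (h.1.symm.trans h'.2.1) (zmod_two_ne _)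
  · exact absurd (h.1.trans h'.2.1) (zmod_two_ne _)
  · exact absurd (h'.1.symm.trans h.2.1) (zmod_two_ne _)
  · exact Prod.ext (h.1.trans h'.1.symm) (sub_left_injective (P.E_inj h.2.2 h'.2.2))
  · refine absurd h'.2.2 ?_
    rw [← neg_sub b.2 a.2]
    exact P.E_mixed h.2.2
  · exact absurd (h'.1.trans h.2.1) (zmod_two_ne _)
  · refine absurd h'.2.2 ?_
    rw [← neg_sub a.2 b.2]
    exact P.E_mixed h.2.2
  · exact Prod.ext (h.1.trans h'.1.symm) (sub_left_injective (P.E_inj h.2.2 h'.2.2))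

lemma PrismEdge.symm {d : Z} {k : ZMod 3} {a b : ZMod 2 × Z} (h : P.PrismEdge d k a b) :
    P.PrismEdge d k b a := by
  obtain ⟨hd, h | h | h⟩ := h
  · exact ⟨hd, .inr (.inl ⟨h.1.symm, h.2⟩)⟩
  · exact ⟨hd, .inl ⟨h.1.symm, h.2⟩⟩
  · exact ⟨hd, .inr (.inr ⟨by rw [h.1, zmod_two_add], h.2.1.symm, by rw [h.2.1, h.2.2]⟩)⟩

lemma Edge.symm {l : (Z × ZMod 3) ⊕ Z} {a b : ZMod 2 × Z} (h : P.Edge l a b) : P.Edge l b a := by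
  rcases l with ⟨d, k⟩ | e
  · exact PrismEdge.symm h
  · exact ⟨h.1, by rw [h.2.1, zmod_two_add], h.2.2.symm⟩

lemma Edge.valid {l : (Z × ZMod 3) ⊕ Z} {a b : ZMod 2 × Z} (h : P.Edge l a b) : P.Valid l := by
  rcases l with ⟨d, k⟩ | e <;> exact h.1

lemma Edge.ne {l : (Z × ZMod 3) ⊕ Z} {a b : ZMod 2 × Z} (h : P.Edge l a b) : a ≠ b := by
  rintro rfl
  rcases l with ⟨d, k⟩ | e
  · obtain ⟨hd, h | h | h⟩ := h
    · exact P.Q_ne hd (by simpa using h.2.1)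
    · exact P.Q_ne hd (by simpa using h.2.1)
    · exact zmod_two_ne _ h.1
  · exact zmod_two_ne _ h.2.1

/-- The pure prism edges in terms of differences. -/
lemma PrismEdge.pure {d : Z} {k : ZMod 3} {a b : ZMod 2 × Z} (h : P.PrismEdge d k a b)
    (hab : b.1 = a.1) : (d = b.2 - a.2 ∧ P.γ d (proj (P.em d) a) = k) ∨
      (d = -(b.2 - a.2) ∧ P.γ d (proj (P.em d) b) = k) := by
  obtain ⟨hd, h | h | h⟩ := h
  · refine .inl ⟨?_, h.2.2⟩
    rw [← proj_sub hab, h.2.1, add_sub_cancel_left]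
  · refine .inr ⟨?_, h.2.2⟩
    rw [← proj_sub hab, h.2.1, sub_add_cancel_left, neg_neg]
  · exact absurd (hab.symm.trans h.1) (zmod_two_ne _)

lemma PrismEdge.mixed {d : Z} {k : ZMod 3} {a b : ZMod 2 × Z} (h : P.PrismEdge d k a b)
    (hab : b.1 = a.1 + 1) : P.em d = mixed a b ∧
      P.γ d (proj (P.em d) a) + P.γ d (proj (P.em d) a - d) + k = 0 := by
  obtain ⟨hd, h | h | h⟩ := h
  · exact absurd (h.1.symm.trans hab) (zmod_two_ne _)
  · exact absurd (h.1.symm.trans hab) (zmod_two_ne _)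
  · exact ⟨(proj_eq_iff hab _).1 h.2.1, h.2.2⟩

lemma Edge.unique {l l' : (Z × ZMod 3) ⊕ Z} {a b : ZMod 2 × Z} (h : P.Edge l a b)
    (h' : P.Edge l' a b) : l = l' := by
  rcases l with ⟨d, k⟩ | e <;> rcases l' with ⟨d', k'⟩ | e'
  · change P.PrismEdge _ _ _ _ at h h'
    rcases zmod_two_cases a.1 b.1 with hab | hab
    · have hd := h.1
      have hd' := h'.1
      rcases h.pure hab with ⟨h1, h2⟩ | ⟨h1, h2⟩ <;> rcases h'.pure hab with ⟨h3, h4⟩ | ⟨h3, h4⟩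
      · obtain rfl : d = d' := h1.trans h3.symm
        rw [← h2, ← h4]
      · rw [h3, ← h1] at hd'
        exact absurd hd' (P.Q_neg hd)
      · rw [h1, ← h3] at hd
        exact absurd hd (P.Q_neg hd')
      · obtain rfl : d = d' := h1.trans h3.symm
        rw [← h2, ← h4]
    · obtain ⟨h1, h2⟩ := h.mixed hab
      obtain ⟨h3, h4⟩ := h'.mixed hab
      obtain rfl : d = d' := P.em_inj h.1 h'.1 (h1.trans h3.symm)
      rw [add_left_cancel (h2.trans h4.symm)]
  · have h1 := h'.2.1
    exact absurd (((proj_eq_iff h1 _).1 h'.2.2).trans (PrismEdge.mixed h h1).1.symm)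
      (h'.1.2.2 _ h.1)
  · have h1 := h.2.1
    exact absurd (((proj_eq_iff h1 _).1 h.2.2).trans (PrismEdge.mixed h' h1).1.symm)
      (h.1.2.2 _ h'.1)
  · have h1 := h.2.1
    rw [(proj_eq_iff h1 _).1 h.2.2, (proj_eq_iff h1 _).1 h'.2.2]

lemma Tri.not_edge {l : (Z × ZMod 3) ⊕ Z} {a b c : ZMod 2 × Z} (h : P.Tri a b c) :
    ¬ P.Edge l a b := by
  intro h'
  have key : ∀ {a b c : ZMod 2 × Z}, P.Tri₀ a c b → ¬ P.Edge l a b := by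
    intro a b c h h'
    rcases l with ⟨d, k⟩ | e
    · have h1 := (PrismEdge.mixed h' h.2.1).1
      rcases mixed_cases a b with h2 | h2
      · exact P.em_ne h'.1 h.2.2 (h1.trans h2)
      · exact P.em_ne_neg h'.1 h.2.2 (h1.trans h2)
    · have h1 := (proj_eq_iff h'.2.1 _).1 h'.2.2
      have h3 := h.2.2
      rcases mixed_cases a b with h2 | h2
      · rw [← h2, ← h1] at h3
        exact h'.1.1 _ h3
      · rw [← neg_eq_iff_eq_neg.2 h2, ← h1] at h3
        exact h'.1.2.1 _ h3
  rcases h with h | h | h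
  · rcases l with ⟨d, k⟩ | e
    · have hd := h'.1
      rcases PrismEdge.pure h' h.1 with ⟨h1, -⟩ | ⟨h1, -⟩
      · rw [h1] at hd
        exact P.Q_not_E hd h.2.2
      · rw [h1] at hd
        exact P.Q_not_E hd (P.E_neg h.2.2)
    · exact zmod_two_ne _ (h.1.symm.trans h'.2.1)
  · exact key h h'
  · exact key h h'.symm

lemma exists_tri_or_edge {a b : ZMod 2 × Z} (hab : a ≠ b) :
    (∃ c, P.Tri a b c) ∨ ∃ l, P.Edge l a b := by
  rcases zmod_two_cases a.1 b.1 with h | h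
  · have hne : b.2 - a.2 ≠ 0 := fun e => hab (Prod.ext h.symm (sub_eq_zero.1 e).symm)
    rcases P.cover _ hne with ⟨e, he⟩ | hd | hd
    · exact .inl ⟨(a.1 + 1, a.2 + e), .inl ⟨h, rfl, by simpa using he⟩⟩
    · refine .inr ⟨.inl (b.2 - a.2, _), hd, .inl ⟨h, ?_, rfl⟩⟩
      rw [← sub_eq_iff_eq_add', proj_sub h]
    · refine .inr ⟨.inl (-(b.2 - a.2), _), hd, .inr (.inl ⟨h, ?_, rfl⟩)⟩
      rw [← sub_eq_iff_eq_add', proj_sub h.symm, neg_sub]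
  · by_cases h1 : ∃ δ, (δ, b.2 - a.2) ∈ P.E
    · obtain ⟨δ, hδ⟩ := h1
      exact .inl ⟨(a.1, a.2 + δ), .inr (.inl ⟨rfl, h, by simpa using hδ⟩)⟩
    by_cases h2 : ∃ δ, (δ, a.2 - b.2) ∈ P.E
    · obtain ⟨δ, hδ⟩ := h2
      exact .inl ⟨(b.1, b.2 + δ), .inr (.inr ⟨rfl, by rw [h, zmod_two_add], by simpa using hδ⟩)⟩
    right
    by_cases h3 : ∃ d, P.Q d ∧ mixed a b = P.em d
    · obtain ⟨d, hd, h3⟩ := h3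
      exact ⟨.inl (d, _), hd, .inr (.inr ⟨h, (proj_eq_iff h _).2 h3.symm, add_neg_cancel _⟩)⟩
    · push Not at h1 h2 h3
      refine ⟨.inr (mixed a b), ⟨?_, ?_, h3⟩, h, (proj_eq_iff h _).2 rfl⟩
      · rcases mixed_cases a b with h4 | h4 <;> rw [h4]
        · exact h1
        · rwa [neg_sub]
      · rcases mixed_cases a b with h4 | h4 <;> rw [h4]
        · rwa [neg_sub]
        · rwa [neg_neg]

lemma existsUnique_edge {l : (Z × ZMod 3) ⊕ Z} (hl : P.Valid l) (a : ZMod 2 × Z) :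
    ∃! b, P.Edge l a b := by
  have hproj : ∀ (s i : Z), proj s (a.1, a.2 + i) = proj s a + i := fun s i => by
    unfold proj
    split_ifs <;> simp [add_sub_right_comm]
  have hcross : ∀ s : Z, ∃ b : ZMod 2 × Z, b.1 = a.1 + 1 ∧ proj s b = proj s a := fun s => by
    by_cases h : a.1 + 1 = 0
    · exact ⟨(a.1 + 1, proj s a), rfl, by simp [proj, h]⟩
    · refine ⟨(a.1 + 1, proj s a + s), rfl, ?_⟩
      rw [proj, if_neg h, add_sub_cancel_right]
  have hinj : ∀ {s : Z} {b b' : ZMod 2 × Z}, b.1 = b'.1 → proj s b = proj s b' → b = b' := by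
    intro s b b' h1 h2
    refine Prod.ext h1 (sub_eq_zero.1 ?_)
    rw [← proj_sub h1, h2, sub_self]
  rcases l with ⟨d, k⟩ | e
  · have hd : P.Q d := hl
    have hγ := P.γ_ne hd (proj (P.em d) a - d)
    rw [sub_add_cancel] at hγ
    have hthree : ∀ x y z : ZMod 3, x ≠ y → x + y + z = 0 → z ≠ x ∧ z ≠ y := by decide
    have hthree' : ∀ x y z : ZMod 3, x ≠ y → z ≠ x → z ≠ y → x + y + z = 0 := by decide
    refine existsUnique_of_exists_of_unique ?_ ?_
    · by_cases h1 : P.γ d (proj (P.em d) a) = k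
      · exact ⟨(a.1, a.2 + d), hd, .inl ⟨rfl, hproj _ _, h1⟩⟩
      by_cases h2 : P.γ d (proj (P.em d) a - d) = k
      · refine ⟨(a.1, a.2 + -d), hd, .inr (.inl ⟨rfl, ?_, ?_⟩)⟩
        · rw [hproj, neg_add_cancel_right]
        · rwa [hproj, ← sub_eq_add_neg]
      obtain ⟨b, hb, hb'⟩ := hcross (P.em d)
      exact ⟨b, hd, .inr (.inr ⟨hb, hb', hthree' _ _ _ hγ.symm (Ne.symm h1) (Ne.symm h2)⟩)⟩
    · rintro b b' ⟨-, h⟩ ⟨-, h'⟩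
      rcases h with h | h | h <;> rcases h' with h' | h' | h'
      · exact hinj (h.1.trans h'.1.symm) (h.2.1.trans h'.2.1.symm)
      · rw [h'.2.1, add_sub_cancel_right, h'.2.2, ← h'.2.1] at hγ
        exact absurd h.2.2.symm hγ
      · exact absurd h.2.2.symm (hthree _ _ _ hγ.symm h'.2.2).1
      · rw [h.2.1, add_sub_cancel_right, h.2.2, ← h.2.1] at hγ
        exact absurd h'.2.2.symm hγ
      · exact hinj (h.1.trans h'.1.symm) (add_left_injective d (h.2.1.symm.trans h'.2.1))
      · have := (hthree _ _ _ hγ.symm h'.2.2).2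
        rw [h.2.1, add_sub_cancel_right] at this
        exact absurd h.2.2.symm this
      · exact absurd h'.2.2.symm (hthree _ _ _ hγ.symm h.2.2).1
      · have := (hthree _ _ _ hγ.symm h.2.2).2
        rw [h'.2.1, add_sub_cancel_right] at this
        exact absurd h'.2.2.symm this
      · exact hinj (h.1.trans h'.1.symm) (h.2.1.trans h'.2.1.symm)
  · obtain ⟨b, hb, hb'⟩ := hcross e
    refine ⟨b, ⟨hl, hb, hb'⟩, fun b' h' => ?_⟩
    exact hinj (h'.2.1.trans hb.symm) (h'.2.2.trans hb'.symm)

/-- The hole system described by `P`, with the matchings labelled by `X`. -/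
theorem exists_hole {X : Type*} (θ : X ≃ {l // P.Valid l}) :
    ∃ h : Hole X (ZMod 2 × Z), h.HasRel (fun x => P.Edge (θ x).1) P.Tri := by
  refine Hole.exists_hasRel _ _ (fun _ _ _ h => h.symm) (fun _ _ _ h => h.symm)
    (fun _ _ _ h => h.symm') (fun _ _ _ h => h.ne) (fun _ _ _ h => h.ne)
    (fun _ _ _ _ h h' => h.unique h')
    (fun x y _ _ h h' => θ.injective (Subtype.ext (h.unique h'))) (fun _ _ _ _ h => h.not_edge)
    (fun a b hab => ?_) (fun x a => existsUnique_edge (θ x).2 a)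
  refine (exists_tri_or_edge hab).imp_right ?_
  rintro ⟨l, hl⟩
  exact ⟨θ.symm ⟨l, hl.valid⟩, by simpa using hl⟩

lemma card_filter_tri [Fintype Z] :
    (univ.filter fun b => ∃ c, P.Tri 0 b c).card = 3 * P.E.card := by
  have h2 : (1 : ZMod 2) + 1 = 0 := by decide
  have hne : (0 : ZMod 2) ≠ 1 := by decide
  have heq : (univ.filter fun b => ∃ c, P.Tri 0 b c) =
      (P.E.image fun x => ((0 : ZMod 2), x.1)) ∪
        ((P.E.image fun x => ((1 : ZMod 2), x.2)) ∪ P.E.image fun x => ((1 : ZMod 2), -x.2)) := by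
    ext b
    simp only [mem_filter, mem_univ, true_and, mem_union, mem_image]
    constructor
    · rintro ⟨c, h | h | h⟩
      · exact .inl ⟨_, h.2.2, Prod.ext h.1.symm (by simp)⟩
      · exact .inr (.inl ⟨_, h.2.2, Prod.ext (by simpa using h.2.1.symm) (by simp)⟩)
      · refine .inr (.inr ⟨_, h.2.2, Prod.ext ?_ (by simp)⟩)
        have := h.2.1
        rw [← zmod_two_add b.1, ← this]
        rfl
    · rintro (⟨⟨δ, e⟩, h, rfl⟩ | ⟨⟨δ, e⟩, h, rfl⟩ | ⟨⟨δ, e⟩, h, rfl⟩)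
      · exact ⟨(1, e), .inl ⟨rfl, rfl, by simpa using h⟩⟩
      · exact ⟨(0, δ), .inr (.inl ⟨rfl, rfl, by simpa using h⟩)⟩
      · exact ⟨(1, -e + δ), .inr (.inr ⟨rfl, h2.symm, by simpa using h⟩)⟩
  rw [heq, card_union_of_disjoint, card_union_of_disjoint, card_image_of_injOn,
    card_image_of_injOn, card_image_of_injOn]
  · ring
  · rintro ⟨δ, e⟩ h ⟨δ', e'⟩ h' hh
    obtain rfl : e = e' := by simpa using hh
    rw [P.E_inj h h']
  · rintro ⟨δ, e⟩ h ⟨δ', e'⟩ h' hh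
    obtain rfl : e = e' := by simpa using hh
    rw [P.E_inj h h']
  · rintro ⟨δ, e⟩ h ⟨δ', e'⟩ h' hh
    obtain rfl : δ = δ' := by simpa using hh
    rw [P.E_fun h h']
  · rw [disjoint_left]
    intro b h h'
    obtain ⟨⟨δ, e⟩, hx, rfl⟩ := mem_image.1 h
    obtain ⟨⟨δ', e'⟩, hx', hh⟩ := mem_image.1 h'
    obtain rfl : -e' = e := by simpa using hh
    exact P.E_mixed hx' hx
  · rw [disjoint_left]
    intro b h h'
    obtain ⟨x, -, rfl⟩ := mem_image.1 h
    rcases mem_union.1 h' with h' | h' <;> obtain ⟨y, -, hy⟩ := mem_image.1 h' <;>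
      exact hne (congrArg Prod.fst hy).symm

/-- The number of matchings. -/
theorem card_valid [Fintype Z] :
    Fintype.card {l // P.Valid l} + 3 * P.E.card + 1 = 2 * Fintype.card Z := by
  have h1 : Fintype.card {l // P.Valid l} =
      (univ.filter fun b => ∃ l, P.Edge l 0 b).card := by
    choose f hf hf' using fun l : {l // P.Valid l} => existsUnique_edge l.2 0
    rw [← card_univ, ← card_image_of_injective (f := f)]
    · congr 1
      ext b
      simp only [mem_image, mem_univ, true_and, mem_filter]
      constructor
      · rintro ⟨l, rfl⟩
        exact ⟨l.1, hf l⟩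
      · rintro ⟨l, hl⟩
        exact ⟨⟨l, hl.valid⟩, (hf' ⟨l, hl.valid⟩ b hl).symm⟩
    · intro l l' h
      have h' := hf l'
      rw [← h] at h'
      exact Subtype.ext ((hf l).unique h')
  rw [h1, ← card_filter_tri, ← card_union_of_disjoint]
  · have h2 : (univ.filter fun b => ∃ l, P.Edge l 0 b) ∪ (univ.filter fun b => ∃ c, P.Tri 0 b c) =
        univ.erase 0 := by
      ext b
      simp only [mem_union, mem_filter, mem_univ, true_and, mem_erase, and_true]
      constructor
      · rintro (⟨l, h⟩ | ⟨c, h⟩)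
        · exact h.ne.symm
        · exact h.ne.symm
      · exact fun h => (exists_tri_or_edge h.symm).symm
    rw [h2, card_erase_add_one (mem_univ _), card_univ, Fintype.card_prod, ZMod.card]
  · rw [disjoint_left]
    intro b h h'
    obtain ⟨l, h⟩ := (mem_filter.1 h).2
    obtain ⟨c, h'⟩ := (mem_filter.1 h').2
    exact h'.not_edge h

end PrismData

lemma zmod_intCast_inj {c : ℕ} {x y : ℤ} (h : (x : ZMod c) = y) (h1 : x - y < c)
    (h2 : y - x < c) : x = y := by
  rw [ZMod.intCast_eq_intCast_iff_dvd_sub] at h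
  have := Int.eq_zero_of_abs_lt_dvd h (abs_lt.2 ⟨by omega, by omega⟩)
  omega

namespace ConcretePrism

variable (c m D : ℕ)

/-- The triangle with pure difference `x` and mixed difference `y`. -/
def IntTri (x y : ℤ) : Prop :=
  2 * y = x - D + 2 ∧ (D ≤ x ∧ x < D + 2 * m ∨ -x < D + 2 * m ∧ D ≤ -x)

/-- The differences of the triangles. -/
def triangles : Finset (ZMod c × ZMod c) :=
  ((range m).image fun j : ℕ => (((D + 2 * j : ℤ) : ZMod c), ((j + 1 : ℤ) : ZMod c))) ∪
    (range m).image fun j : ℕ => (((-(D + 2 * j) : ℤ) : ZMod c), ((1 - D - j : ℤ) : ZMod c))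

variable {c m D}

lemma mem_triangles {δ e : ZMod c} :
    (δ, e) ∈ triangles c m D ↔ ∃ x y : ℤ, IntTri m D x y ∧ δ = x ∧ e = y := by
  simp only [triangles, mem_union, mem_image, mem_range, Prod.mk.injEq]
  constructor
  · rintro (⟨j, hj, h1, h2⟩ | ⟨j, hj, h1, h2⟩)
    · exact ⟨_, _, ⟨by ring, .inl (by omega)⟩, h1.symm, h2.symm⟩
    · exact ⟨_, _, ⟨by ring, .inr (by omega)⟩, h1.symm, h2.symm⟩
  · rintro ⟨x, y, ⟨hxy, h | h⟩, rfl, rfl⟩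
    · refine .inl ⟨(y - 1).toNat, by omega, ?_, ?_⟩ <;> congr 1 <;> omega
    · refine .inr ⟨(1 - D - y).toNat, by omega, ?_, ?_⟩ <;> congr 1 <;> omega

lemma card_triangles (hm : 2 * m + 10 ≤ D) (hc : 20 * D ≤ c) :
    (triangles c m D).card = 2 * m := by
  rw [triangles, card_union_of_disjoint, card_image_of_injOn, card_image_of_injOn, card_range,
    two_mul]
  · intro j hj j' hj' h
    have := zmod_intCast_inj (congrArg Prod.fst h)
    simp only [coe_range, Set.mem_Iio] at hj hj'
    omega
  · intro j hj j' hj' h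
    have := zmod_intCast_inj (congrArg Prod.fst h)
    simp only [coe_range, Set.mem_Iio] at hj hj'
    omega
  · rw [disjoint_left]
    intro p h h'
    obtain ⟨j, hj, rfl⟩ := mem_image.1 h
    obtain ⟨j', hj', h⟩ := mem_image.1 h'
    have := zmod_intCast_inj (congrArg Prod.fst h)
    simp only [mem_range] at hj hj'
    omega

variable (c m D)

/-- The pure differences of the prisms: representatives up to sign of those not occurring in
triangles. -/
def IsPrism (d : ZMod c) : Prop :=
  1 ≤ d.val ∧ 2 * d.val < c ∧ ∀ y : ℤ, ¬ IntTri m D d.val y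

/-- The colouring of the edges `(i, i + d)`. -/
def colour (d i : ZMod c) : ZMod 3 :=
  if c ≤ i.val + d.val then 2 else if i.val / d.val % 2 = 0 then 0 else 1

/-- The integer representing the mixed difference of a prism. -/
def intMixed (k n : ℕ) : ℤ :=
  if n = 1 then -(4 * D + 1 + k) else if n ≤ 2 * D then -(n + 2 * D) else n

variable {c m D}

lemma intMixed_cases (D k : ℕ) {n : ℕ} (hn : 1 ≤ n) :
    (n = 1 ∧ intMixed D k n = -(4 * D + 1 + k)) ∨
    (2 ≤ n ∧ n ≤ 2 * D ∧ intMixed D k n = -(n + 2 * D)) ∨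
    (2 * D < n ∧ intMixed D k n = n) ∨ D = 0 := by
  unfold intMixed
  split_ifs <;> omega

lemma colour_ne [NeZero c] {d : ZMod c} (hd : 1 ≤ d.val) (hd' : 2 * d.val < c) (i : ZMod c) :
    colour c d i ≠ colour c d (i + d) := by
  have h01 : (0 : ZMod 3) ≠ 1 := by decide
  have h02 : (0 : ZMod 3) ≠ 2 := by decide
  have h12 : (1 : ZMod 3) ≠ 2 := by decide
  have hi := ZMod.val_lt i
  unfold colour
  by_cases h : c ≤ i.val + d.val
  · have h1 : (i + d).val = i.val + d.val - c := by
      have := ZMod.val_add_val_of_le h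
      omega
    have h2 : (i + d).val / d.val = 0 := Nat.div_eq_of_lt (by omega)
    have h3 : ¬ c ≤ (i + d).val + d.val := by omega
    rw [if_pos h, if_neg h3, h2, if_pos (by norm_num)]
    exact h02.symm
  · have h1 : (i + d).val = i.val + d.val := ZMod.val_add_of_lt (by omega)
    rw [if_neg h, h1, Nat.add_div_right _ hd]
    split_ifs <;> first | omega | assumption | exact h01.symm

/-- The prism data with parameter `k`. -/
def data [NeZero c] (hm : 2 * m + 10 ≤ D) (hodd : c % 2 = 1) (k : ℕ) (hc : 20 * D + 4 * k ≤ c) :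
    PrismData (ZMod c) where
  E := triangles c m D
  Q := IsPrism c m D
  γ := colour c
  em d := (intMixed D k d.val : ℤ)
  E_neg h := by
    obtain ⟨x, y, ⟨h1, h2⟩, rfl, rfl⟩ := mem_triangles.1 h
    exact mem_triangles.2 ⟨-x, y - x, ⟨by omega, by omega⟩, by simp, by simp⟩
  E_fun h h' := by
    obtain ⟨x, y, ⟨h1, h2⟩, rfl, rfl⟩ := mem_triangles.1 h
    obtain ⟨x', y', ⟨h3, h4⟩, h5, rfl⟩ := mem_triangles.1 h'
    have := zmod_intCast_inj h5 (by omega) (by omega)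
    congr 1
    omega
  E_inj h h' := by
    obtain ⟨x, y, ⟨h1, h2⟩, rfl, rfl⟩ := mem_triangles.1 h
    obtain ⟨x', y', ⟨h3, h4⟩, rfl, h5⟩ := mem_triangles.1 h'
    have := zmod_intCast_inj h5 (by omega) (by omega)
    congr 1
    omega
  E_mixed h h' := by
    obtain ⟨x, y, ⟨h1, h2⟩, rfl, rfl⟩ := mem_triangles.1 h
    obtain ⟨x', y', ⟨h3, h4⟩, rfl, h5⟩ := mem_triangles.1 h'
    rw [← Int.cast_neg] at h5
    have := zmod_intCast_inj h5 (by omega) (by omega)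
    omega
  E_ne h h' := by
    obtain ⟨x, y, ⟨h1, h2⟩, rfl, rfl⟩ := mem_triangles.1 h
    rw [← Int.cast_zero] at h'
    have := zmod_intCast_inj h' (by omega) (by omega)
    omega
  Q_ne h h' := by
    have := h.1
    rw [h', ZMod.val_zero] at this
    omega
  Q_neg {d} h h' := by
    have h1 := h.2.1
    have h2 := h'.2.1
    have h3 : d ≠ 0 := fun e => by
      have := h.1
      rw [e, ZMod.val_zero] at this
      omega
    have : NeZero d := ⟨h3⟩
    rw [ZMod.val_neg_of_ne_zero] at h2
    omega
  Q_not_E {d e} h h' := by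
    obtain ⟨x, y, h1, h2, rfl⟩ := mem_triangles.1 h'
    have h3 := h1.2
    have h4 := h.2.1
    rw [← ZMod.natCast_zmod_val d, ← Int.cast_natCast] at h2
    have := zmod_intCast_inj h2 (by omega) (by omega)
    rw [← this] at h1
    exact h.2.2 _ h1
  cover d hd := by
    have : NeZero d := ⟨hd⟩
    have h0 : 1 ≤ d.val := Nat.one_le_iff_ne_zero.2 ((ZMod.val_ne_zero d).2 hd)
    have hlt := ZMod.val_lt d
    have hneg : (-d).val = c - d.val := ZMod.val_neg_of_ne_zero d
    by_cases h : 2 * d.val < c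
    · by_cases h1 : ∃ y, IntTri m D d.val y
      · obtain ⟨y, hy⟩ := h1
        exact .inl ⟨y, mem_triangles.2 ⟨_, y, hy, by simp, rfl⟩⟩
      · push Not at h1
        exact .inr (.inl ⟨h0, h, h1⟩)
    · by_cases h1 : ∃ y, IntTri m D (-d).val y
      · obtain ⟨y, hy⟩ := h1
        refine .inl ⟨((y - (-d).val : ℤ) : ZMod c), mem_triangles.2
          ⟨-((-d).val : ℤ), y - (-d).val, ⟨?_, ?_⟩, by simp, rfl⟩⟩
        · have := hy.1
          omega
        · have := hy.2
          omega
      · push Not at h1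
        exact .inr (.inr ⟨by omega, by omega, h1⟩)
  γ_ne h i := colour_ne h.1 h.2.1 i
  em_inj {d d'} h h' he := by
    have h1 := intMixed_cases D k h.1
    have h2 := intMixed_cases D k h'.1
    have h3 := h.2.1
    have h4 := h'.2.1
    have := zmod_intCast_inj he (by omega) (by omega)
    exact ZMod.val_injective c (by omega)
  em_ne {d δ e} h h' he := by
    obtain ⟨x, y, ⟨h1, h2⟩, rfl, rfl⟩ := mem_triangles.1 h'
    have h3 := intMixed_cases D k h.1
    have h4 := h.2.1
    have := zmod_intCast_inj he (by omega) (by omega)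
    omega
  em_ne_neg {d δ e} h h' he := by
    obtain ⟨x, y, ⟨h1, h2⟩, rfl, rfl⟩ := mem_triangles.1 h'
    have h3 := intMixed_cases D k h.1
    have h4 := h.2.1
    rw [← Int.cast_neg] at he
    have := zmod_intCast_inj he (by omega) (by omega)
    omega

end ConcretePrism

lemma eq_zero_of_two_mul_eq_zero {c : ℕ} (hodd : c % 2 = 1) {x : ZMod c} (h : 2 * x = 0) :
    x = 0 := by
  have h1 : ((2 * (c / 2) + 1 : ℕ) : ZMod c) = 0 := by
    rw [← hodd, Nat.div_add_mod, ZMod.natCast_self]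
  push_cast at h1
  linear_combination x * h1 - ((c / 2 : ℕ) : ZMod c) * h

/-- The affine bijections of `ZMod 2 × ZMod c` for odd `c`. -/
theorem exists_affine_form {c : ℕ} [NeZero c] (hodd : c % 2 = 1)
    {f : Equiv.Perm (ZMod 2 × ZMod c)} (hf : ∀ a b, f (a + b) + f 0 = f a + f b) :
    ∃ (ε₀ : ZMod 2) (u t : ZMod c), ∀ ε i, f (ε, i) = (ε + ε₀, u * i + t) := by
  let φ : ZMod 2 × ZMod c →+ ZMod 2 × ZMod c :=
    { toFun := fun a => f a - f 0
      map_zero' := sub_self _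
      map_add' := fun a b => by
        rw [eq_sub_of_add_eq (hf a b)]
        abel }
  have hφ : ∀ a, f a = φ a + f 0 := fun a => (sub_add_cancel _ _).symm
  have hc2 : ((c : ℕ) : ZMod 2) = 1 := by
    rw [← Nat.cast_one, ZMod.natCast_eq_natCast_iff]
    exact hodd
  have h1 : (φ (0, 1)).1 = 0 := by
    have : φ (c • (0, 1)) = 0 := by
      rw [show c • ((0 : ZMod 2), (1 : ZMod c)) = 0 by ext <;> simp, map_zero]
    rw [map_nsmul] at this
    have := congrArg Prod.fst this
    simpa [hc2] using this
  have h2 : (φ (1, 0)).2 = 0 := by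
    have : φ (2 • (1, 0)) = 0 := by
      have h2 : 2 • (1 : ZMod 2) = 0 := by decide
      rw [show 2 • ((1 : ZMod 2), (0 : ZMod c)) = 0 by ext <;> simp [h2], map_zero]
    rw [map_nsmul] at this
    have := congrArg Prod.snd this
    exact eq_zero_of_two_mul_eq_zero hodd (by simpa using this)
  have h3 : (φ (1, 0)).1 = 1 := by
    have key : ∀ x : ZMod 2, x ≠ 0 → x = 1 := by decide
    refine key _ fun h => ?_
    have h4 : φ (1, 0) = 0 := Prod.ext h h2
    have h5 : f (1, 0) = f 0 := by rw [hφ, h4, zero_add]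
    have h6 := congrArg Prod.fst (f.injective h5)
    exact one_ne_zero h6
  have h4 : ∀ i : ZMod c, φ (0, i) = (0, (φ (0, 1)).2 * i) := fun i => by
    have : ((0 : ZMod 2), i) = i.val • (0, 1) := by ext <;> simp
    rw [this, map_nsmul]
    ext
    · simp [h1]
    · simp [mul_comm]
  have h5 : ∀ ε : ZMod 2, φ (ε, 0) = (ε, 0) := fun ε => by
    have : ∀ x : ZMod 2, x = 0 ∨ x = 1 := by decide
    rcases this ε with rfl | rfl
    · exact map_zero φ
    · exact Prod.ext h3 h2
  refine ⟨(f 0).1, (φ (0, 1)).2, (f 0).2, fun ε i => ?_⟩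
  have : (ε, i) = (ε, 0) + ((0 : ZMod 2), i) := by simp
  rw [hφ, this, map_add, h4, h5]
  ext <;> simp

namespace ConcretePrism

variable {c m D : ℕ} [NeZero c]

/-- The only colour classes of size one. -/
lemma eq_of_unique_colour {d : ZMod c} (hd : 1 ≤ d.val) (hd' : 2 * d.val < c) (hc : 200 ≤ c)
    {κ : ZMod 3} (h : ∀ i j, colour c d i = κ → colour c d j = κ → i = j) :
    (d = 1 ∧ κ = 2) ∨ 2 * d = -1 := by
  have hval : ∀ n < c, ((n : ℕ) : ZMod c).val = n := fun n hn => ZMod.val_cast_of_lt hn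
  have hinj : ∀ n < c, ∀ n' < c, n ≠ n' → ((n : ℕ) : ZMod c) ≠ n' := fun n hn n' hn' hne e =>
    hne (by rw [← hval n hn, e, hval n' hn'])
  have hκ : ∀ x : ZMod 3, x = 0 ∨ x = 1 ∨ x = 2 := by decide
  have key : ∀ n < c, ∀ n' < c, n ≠ n' →
      ¬ (colour c d (n : ℕ) = κ ∧ colour c d (n' : ℕ) = κ) :=
    fun n hn n' hn' hne e => hinj n hn n' hn' hne (h _ _ e.1 e.2)
  have hcol : ∀ n < c, ∀ q, n / d.val = q → colour c d (n : ℕ) =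
      if c ≤ n + d.val then 2 else if q % 2 = 0 then 0 else 1 := fun n hn q hq => by
    rw [colour, hval n hn, hq]
  by_cases h1 : d.val = 1
  · have hd1 : d = 1 := by rw [← ZMod.natCast_zmod_val d, h1, Nat.cast_one]
    rcases hκ κ with rfl | rfl | rfl
    · refine absurd ⟨?_, ?_⟩ (key 0 (by omega) 2 (by omega) (by omega))
      · rw [hcol 0 (by omega) 0 (by simp), if_neg (by omega), if_pos rfl]
      · rw [hcol 2 (by omega) 2 (by simp [h1]), if_neg (by omega), if_pos rfl]
    · refine absurd ⟨?_, ?_⟩ (key 1 (by omega) 3 (by omega) (by omega))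
      · rw [hcol 1 (by omega) 1 (by simp [h1]), if_neg (by omega), if_neg (by omega)]
      · rw [hcol 3 (by omega) 3 (by simp [h1]), if_neg (by omega), if_neg (by omega)]
    · exact .inl ⟨hd1, rfl⟩
  · rcases hκ κ with rfl | rfl | rfl
    · refine absurd ⟨?_, ?_⟩ (key 0 (by omega) 1 (by omega) (by omega))
      · rw [hcol 0 (by omega) 0 (by simp), if_neg (by omega), if_pos rfl]
      · rw [hcol 1 (by omega) 0 (Nat.div_eq_of_lt (by omega)), if_neg (by omega), if_pos rfl]
    · by_cases h2 : 2 * d.val + 1 = c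
      · right
        have h3 : ((2 * d.val + 1 : ℕ) : ZMod c) = 0 := by rw [h2, ZMod.natCast_self]
        push_cast at h3
        rw [ZMod.natCast_zmod_val] at h3
        linear_combination h3
      · refine absurd ⟨?_, ?_⟩ (key d.val (by omega) (d.val + 1) (by omega) (by omega))
        · rw [hcol _ (by omega) 1 (Nat.div_self hd), if_neg (by omega), if_neg (by omega)]
        · rw [hcol _ (by omega) 1 ?_, if_neg (by omega), if_neg (by omega)]
          rw [Nat.add_div_left _ hd, Nat.div_eq_of_lt (by omega)]
    · refine absurd ⟨?_, ?_⟩ (key (c - 1) (by omega) (c - 2) (by omega) (by omega))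
      · rw [hcol _ (by omega) _ rfl, if_pos (by omega)]
      · rw [hcol _ (by omega) _ rfl, if_pos (by omega)]

lemma colour_one_eq_two (hc : 200 ≤ c) {i : ZMod c} : colour c 1 i = 2 ↔ i = -1 := by
  have h1 : (1 : ZMod c).val = 1 := by
    have := ZMod.val_cast_of_lt (n := c) (a := 1) (by omega)
    rwa [Nat.cast_one] at this
  have h2 : (-1 : ZMod c).val = c - 1 := by
    have : NeZero (1 : ZMod c) := ⟨fun e => by
      rw [e, ZMod.val_zero] at h1
      omega⟩
    rw [ZMod.val_neg_of_ne_zero, h1]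
  have h02 : (0 : ZMod 3) ≠ 2 := by decide
  have h12 : (1 : ZMod 3) ≠ 2 := by decide
  have hi := ZMod.val_lt i
  rw [← (ZMod.val_injective c).eq_iff, h2]
  unfold colour
  rw [h1]
  split_ifs <;> first | (simp only [h02, h12, false_iff]; omega) | (simp only [true_iff]; omega)

/-- The systems for different parameters are rigid and not isomorphic. -/
theorem rigid (hm : 2 * m + 10 ≤ D) (hm1 : 1 ≤ m) (hodd : c % 2 = 1) {k l : ℕ}
    (hk : 20 * D + 4 * k ≤ c) (hl : 20 * D + 4 * l ≤ c) {f : Equiv.Perm (ZMod 2 × ZMod c)}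
    (hf : ∀ a b, f (a + b) + f 0 = f a + f b)
    (htri : ∀ a b e, (data (m := m) hm hodd k hk).Tri a b e →
      (data (m := m) hm hodd l hl).Tri (f a) (f b) (f e))
    (hedge : ∀ x, (data (m := m) hm hodd k hk).Valid x → ∃ y, ∀ a b,
      (data (m := m) hm hodd k hk).Edge x a b ↔
        (data (m := m) hm hodd l hl).Edge y (f a) (f b)) : k = l ∧ f = 1 := by
  obtain ⟨ε, u, t, hform⟩ := exists_affine_form hodd hf
  have hc : 200 ≤ c := by omega
  have hval1 : (1 : ZMod c).val = 1 := by
    have := ZMod.val_cast_of_lt (n := c) (a := 1) (by omega)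
    rwa [Nat.cast_one] at this
  have hQ1 : IsPrism c m D 1 := by
    refine ⟨by omega, by omega, fun y hy => ?_⟩
    have := hy.2
    rw [hval1] at this
    omega
  have hD : (u * D, u) ∈ triangles c m D := by
    have h1 := htri (0, 0) (0, D) (1, 1) (.inl ⟨rfl, rfl, mem_triangles.2
      ⟨D, 1, ⟨by omega, by omega⟩, by simp, by simp⟩⟩)
    rw [hform, hform, hform] at h1
    rcases h1 with h1 | h1 | h1
    · have h2 : _ ∈ triangles c m D := h1.2.2
      simpa using h2
    · exact absurd h1.2.1 (PrismData.zmod_two_ne _)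
    · exact absurd h1.2.1 (PrismData.zmod_two_ne _)
  obtain ⟨x, y, ⟨hxy, hx⟩, hux, huy⟩ := mem_triangles.1 hD
  obtain ⟨q, hq⟩ := hedge (.inl (1, 2)) hQ1
  have e1 := (hq (0, -1) (0, 0)).1 ⟨hQ1, .inl ⟨rfl, by simp [PrismData.proj],
    (colour_one_eq_two hc).2 (by simp [PrismData.proj])⟩⟩
  rw [hform, hform] at e1
  rcases q with ⟨d, κ⟩ | e
  swap
  · exact absurd e1.2.1 (PrismData.zmod_two_ne _)
  have hd : IsPrism c m D d := e1.1
  have hd0 : d ≠ 0 := (data hm hodd l hl).Q_ne hd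
  obtain ⟨s, hs⟩ : ∃ s : ZMod c, ∀ i, PrismData.proj ((data (m := m) hm hodd l hl).em d)
      (ε, i + s) = i := by
    by_cases hε : ε = 0
    · exact ⟨0, fun i => by simp [PrismData.proj, hε]⟩
    · exact ⟨_, fun i => by rw [PrismData.proj, if_neg hε, add_sub_cancel_right]⟩
  have hpos : ∀ i, colour c d i = κ → (i + s = t - u ∧ d = u) ∨ (i + s = t ∧ d = -u) := by
    intro i hi
    have h1 : (data (m := m) hm hodd l hl).Edge (.inl (d, κ)) (ε, i + s) (ε, i + d + s) :=
      ⟨hd, .inl ⟨rfl, by rw [hs, hs], by rw [hs]; exact hi⟩⟩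
    have hsurj : ∀ j, ∃ j', f (0, j') = (ε, j) := fun j => by
      obtain ⟨⟨ε', j'⟩, h⟩ := f.surjective (ε, j)
      have h' := h
      rw [hform] at h'
      have h2 : ε' = 0 := by simpa using congrArg Prod.fst h'
      exact ⟨j', h2 ▸ h⟩
    obtain ⟨j, hj⟩ := hsurj (i + s)
    obtain ⟨j', hj'⟩ := hsurj (i + d + s)
    rw [← hj, ← hj'] at h1
    have h2 := PrismData.PrismEdge.pure ((hq _ _).2 h1) rfl
    rw [hform] at hj hj'
    have hj := congrArg Prod.snd hj
    have hj' := congrArg Prod.snd hj'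
    simp only [PrismData.proj, if_true] at h2 hj hj'
    rcases h2 with ⟨h2, h3⟩ | ⟨h2, h3⟩
    · have h3 := (colour_one_eq_two hc).1 h3
      left
      constructor
      · linear_combination -hj + u * h3
      · linear_combination hj - hj' - u * h2
    · have h3 := (colour_one_eq_two hc).1 h3
      right
      constructor
      · linear_combination -hj - u * h2 + u * h3
      · linear_combination hj - hj' + u * h2
  have hunique := eq_of_unique_colour hd.1 hd.2.1 hc (κ := κ) fun i j hi hj => by
    rcases hpos i hi with ⟨h1, h2⟩ | ⟨h1, h2⟩ <;> rcases hpos j hj with ⟨h3, h4⟩ | ⟨h3, h4⟩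
    · exact add_right_cancel (h1.trans h3.symm)
    · exact absurd (eq_zero_of_two_mul_eq_zero hodd (by linear_combination h2 + h4)) hd0
    · exact absurd (eq_zero_of_two_mul_eq_zero hodd (by linear_combination h2 + h4)) hd0
    · exact add_right_cancel (h1.trans h3.symm)
  have hdu := PrismData.PrismEdge.pure e1 rfl
  simp only [mul_zero, zero_add, mul_neg, mul_one] at hdu
  rcases hunique with ⟨rfl, rfl⟩ | h2
  swap
  · have h3 : ((2 * y : ℤ) : ZMod c) = ((-1 : ℤ) : ZMod c) ∨
        ((2 * y : ℤ) : ZMod c) = ((1 : ℤ) : ZMod c) := by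
      push_cast
      rw [← huy]
      rcases hdu with ⟨h3, -⟩ | ⟨h3, -⟩
      · left
        linear_combination h2 - 2 * h3
      · right
        linear_combination -h2 + 2 * h3
    rcases h3 with h3 | h3 <;>
    · have := zmod_intCast_inj h3 (by omega) (by omega)
      omega
  rcases hdu with ⟨h3, h4⟩ | ⟨h3, -⟩
  swap
  · have h5 : (y : ZMod c) = ((-1 : ℤ) : ZMod c) := by
      push_cast
      linear_combination -huy + h3
    have h6 : ((-D : ℤ) : ZMod c) = x := by
      push_cast
      linear_combination hux - D * h3
    have h5 := zmod_intCast_inj h5 (by omega) (by omega)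
    have h6 := zmod_intCast_inj h6 (by omega) (by omega)
    omega
  have hu : u = 1 := by linear_combination -h3
  subst hu
  have h4 := (colour_one_eq_two hc).1 h4
  have hem : ∀ (k : ℕ) (hk : 20 * D + 4 * k ≤ c), (data (m := m) hm hodd k hk).em 1 =
      ((-(4 * D + 1 + k) : ℤ) : ZMod c) := fun k hk => by
    change ((intMixed D k (1 : ZMod c).val : ℤ) : ZMod c) = _
    rw [hval1, intMixed, if_pos rfl]
  have e2 := (hq (0, 1) (1, 1 + (data (m := m) hm hodd k hk).em 1)).1
    ⟨hQ1, .inr (.inr ⟨rfl, by simp [PrismData.proj], by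
      have h5 : colour c 1 1 = 1 := by
        rw [colour, hval1, if_neg (by omega), if_neg (by omega)]
      have h6 : colour c 1 0 = 0 := by
        rw [colour, hval1, ZMod.val_zero, if_neg (by omega), if_pos (by omega)]
      change colour c 1 1 + colour c 1 (1 - 1) + 2 = 0
      rw [sub_self, h5, h6]
      decide⟩)⟩
  rw [hform, hform] at e2
  have e3 := (PrismData.PrismEdge.mixed e2 (by rw [zero_add, add_comm])).1
  rw [hem, hem] at e3
  have htwo : ∀ x : ZMod 2, x = 0 ∨ x = 1 := by decide
  rcases htwo ε with rfl | rfl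
  · simp only [PrismData.mixed, add_zero, if_true, one_mul] at e3
    have e4 : ((-(4 * D + 1 + l) : ℤ) : ZMod c) = ((-(4 * D + 1 + k) : ℤ) : ZMod c) := by
      rw [e3]
      ring
    have e4 := zmod_intCast_inj e4 (by omega) (by omega)
    simp only [PrismData.proj, if_true] at h4
    have ht : t = 0 := by linear_combination h4
    refine ⟨by omega, Equiv.ext fun a => ?_⟩
    rw [← Prod.mk.eta (p := a), hform, ht]
    simp
  · simp only [PrismData.mixed, zero_add, one_ne_zero, if_false, one_mul] at e3
    have e4 : ((-(4 * D + 1 + l) : ℤ) : ZMod c) = ((4 * D + 1 + k : ℤ) : ZMod c) := by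
      rw [e3]
      push_cast
      ring
    have e4 := zmod_intCast_inj e4 (by omega) (by omega)
    omega

end ConcretePrism

namespace ConcretePrism

variable {c m D : ℕ} [NeZero c]

lemma nsmul_one_one_surjective (hodd : c % 2 = 1) (a : ZMod 2 × ZMod c) :
    ∃ n : ℕ, n • ((1, 1) : ZMod 2 × ZMod c) = a := by
  obtain ⟨ε, i⟩ := a
  have htwo : ∀ (n : ℕ) (x : ZMod 2), (n : ZMod 2) = x ∨ (n : ZMod 2) + 1 = x := by
    intro n x
    generalize (n : ZMod 2) = y
    revert x y
    decide
  have hc : (c : ZMod 2) = 1 := by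
    rw [← ZMod.natCast_mod, hodd, Nat.cast_one]
  rcases htwo i.val ε with h | h
  · exact ⟨i.val, by ext <;> simp [h]⟩
  · exact ⟨i.val + c, Prod.ext (by simpa [hc] using h) (by simp)⟩

lemma generating (hm : 2 * m + 10 ≤ D) (hm1 : 1 ≤ m) (hodd : c % 2 = 1) {k : ℕ}
    (hk : 20 * D + 4 * k ≤ c) {X : Type*} {h : Hole X (ZMod 2 × ZMod c)}
    {lab : X → ZMod 2 × ZMod c → ZMod 2 × ZMod c → Prop}
    (hh : h.HasRel lab (data (m := m) hm hodd k hk).Tri) {n : ℕ} (hn : n.factorial ∣ D) :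
    h.Generating n := by
  intro K hK S ⟨s₀, hs₀⟩ hKS hS
  have hD : ((0, D) : ZMod 2 × ZMod c) ∈ K := by
    have hpos := Nat.pos_of_ne_zero K.index_ne_zero_of_finite
    obtain ⟨q, rfl⟩ := (Nat.dvd_factorial hpos hK).trans hn
    have := K.nsmul_index_mem ((0, q) : ZMod 2 × ZMod c)
    simpa using this
  have hstep : ∀ s ∈ S, s + (1, 1) ∈ S := fun s hs => by
    refine hS s hs _ (hKS _ hD s hs) _ (hh.tri_eq_inr (.inl ⟨by simp, by simp, ?_⟩))
    exact mem_triangles.2 ⟨D, 1, ⟨by omega, by omega⟩, by simp, by simp⟩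
  have hmul : ∀ n : ℕ, s₀ + n • (1, 1) ∈ S := fun n => by
    induction n with
    | zero => simpa using hs₀
    | succ n ih => simpa only [succ_nsmul, ← add_assoc] using hstep _ ih
  refine Set.eq_univ_of_forall fun a => ?_
  obtain ⟨n, hn⟩ := nsmul_one_one_surjective hodd (a - s₀)
  have := hmul n
  rwa [hn, add_sub_cancel] at this

/-- A family of rigid, pairwise non-isomorphic hole systems. -/
theorem exists_rigid_holes (hm : 2 * m + 10 ≤ D) (hm1 : 1 ≤ m) (hodd : c % 2 = 1) {K : ℕ}
    (hK : 20 * D + 4 * K ≤ c) {n : ℕ} (hn : n.factorial ∣ D) {X : Type*} [Fintype X]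
    (hX : Fintype.card X + 6 * m + 1 = 2 * c) :
    ∃ H : Fin K → Hole X (ZMod 2 × ZMod c), (∀ k, (H k).Generating n) ∧
      ∀ k l (f : Equiv.Perm (ZMod 2 × ZMod c)) (ρ : X → X), Function.Injective ρ →
        (∀ a b, f (a + b) + f 0 = f a + f b) →
        (∀ a b, (H l).tri (f a) (f b) = ((H k).tri a b).map ρ f) → k = l ∧ f = 1 := by
  have hk : ∀ k : Fin K, 20 * D + 4 * (k : ℕ) ≤ c := fun k => by omega
  have hcard : ∀ k : Fin K,
      Fintype.card X = Fintype.card {l // (data (m := m) hm hodd k (hk k)).Valid l} := fun k => by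
    have h1 := (data (m := m) hm hodd k (hk k)).card_valid
    have h2 : (data (m := m) hm hodd k (hk k)).E.card = 2 * m := card_triangles hm (by omega)
    rw [h2, ZMod.card] at h1
    omega
  let θ : ∀ k : Fin K, X ≃ {l // (data (m := m) hm hodd k (hk k)).Valid l} := fun k =>
    Fintype.equivOfCardEq (hcard k)
  choose H hH using fun k : Fin K => PrismData.exists_hole (θ k)
  refine ⟨H, fun k => generating hm hm1 hodd (hk k) (hH k) hn, fun k l f ρ hρ hf htri => ?_⟩
  have key := rigid (k := k) (l := l) hm hm1 hodd (hk k) (hk l) hf (fun a b e h => ?_)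
    fun x hx => ⟨(θ l (ρ ((θ k).symm ⟨x, hx⟩))).1, fun a b => ?_⟩
  · exact ⟨Fin.ext key.1, key.2⟩
  · refine (hH l).of_tri_eq_inr (f.injective.ne h.ne) ?_
    rw [htri, (hH k).tri_eq_inr h, Sum.map_inr]
  · have hx' : x = (θ k ((θ k).symm ⟨x, hx⟩)).1 := by rw [Equiv.apply_symm_apply]
    generalize (θ k).symm ⟨x, hx⟩ = z at hx' ⊢
    subst hx'
    constructor
    · intro h
      refine (hH l).of_tri_eq_inl ?_
      rw [htri, (hH k).tri_eq_inl h, Sum.map_inl]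
    · intro h
      have h1 := (hH l).tri_eq_inl h
      rw [htri] at h1
      refine (hH k).of_tri_eq_inl ?_
      rcases hz : (H k).tri a b with w | w
      · rw [hz, Sum.map_inl, Sum.inl.injEq] at h1
        rw [hρ h1]
      · simp [hz] at h1

end ConcretePrism

lemma pi_zmod_two_add_self {β : Type*} (w : β → ZMod 2) : w + w = 0 :=
  funext fun b => CharTwo.add_self_eq_zero (w b)

/-- The Steiner quasigroup of the projective space over `ZMod 2` with homogeneous coordinates
indexed by `β`. -/
def projectiveQuasigroup (β : Type*) : SteinerQuasigroup {w : β → ZMod 2 // w ≠ 0} where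
  op v w := if h : v = w then v else ⟨v.1 + w.1, fun e => h (Subtype.ext
    (add_right_cancel (e.trans (pi_zmod_two_add_self w.1).symm)))⟩
  op_self v := dif_pos rfl
  op_comm v w := by
    by_cases h : v = w
    · rw [h]
    · rw [dif_neg h, dif_neg (Ne.symm h)]
      exact Subtype.ext (add_comm _ _)
  op_op v w := by
    by_cases h : v = w
    · simp [h]
    · have h1 : v.1 + (v.1 + w.1) = w.1 := by
        rw [← add_assoc, pi_zmod_two_add_self, zero_add]
      rw [dif_neg h, dif_neg]
      · exact Subtype.ext h1
      · intro e
        have := congrArg Subtype.val e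
        exact w.2 (by simpa using this)

lemma projectiveQuasigroup_op_val {β : Type*} {v w : {w : β → ZMod 2 // w ≠ 0}} (h : v ≠ w) :
    ((projectiveQuasigroup β).op v w).1 = v.1 + w.1 := by
  simp [projectiveQuasigroup, h]

/-- An automorphism of a projective space over `ZMod 2` is linear. -/
lemma exists_addMonoidHom_of_projective_aut {β : Type*}
    {g : Equiv.Perm {w : β → ZMod 2 // w ≠ 0}} (hg : g ∈ (projectiveQuasigroup β).autSubgroup) :
    ∃ φ : (β → ZMod 2) →+ (β → ZMod 2), ∀ v, φ v.1 = (g v).1 := by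
  let φ : (β → ZMod 2) → (β → ZMod 2) := fun w => if h : w ≠ 0 then (g ⟨w, h⟩).1 else 0
  have hφ : ∀ v, φ v.1 = (g v).1 := fun v => dif_pos v.2
  have h0 : φ 0 = 0 := by simp [φ]
  refine ⟨{ toFun := φ, map_zero' := h0, map_add' := fun v w => ?_ }, hφ⟩
  by_cases hv : v = 0
  · rw [hv, h0, zero_add, zero_add]
  by_cases hw : w = 0
  · rw [hw, h0, add_zero, add_zero]
  by_cases hvw : v = w
  · rw [hvw, pi_zmod_two_add_self, pi_zmod_two_add_self, h0]
  have h1 : (⟨v, hv⟩ : {w : β → ZMod 2 // w ≠ 0}) ≠ ⟨w, hw⟩ := fun e => hvw (congrArg Subtype.val e)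
  have h2 := congrArg Subtype.val (hg ⟨v, hv⟩ ⟨w, hw⟩)
  rw [← hφ, projectiveQuasigroup_op_val h1, projectiveQuasigroup_op_val (g.injective.ne h1),
    ← hφ, ← hφ] at h2
  exact h2

section CoordinateAction

variable {G : Type*} [Group G] {r : ℕ}

/-- The action of `G` on two copies of itself and `r` fixed points. -/
def shift (h : G) : G ⊕ G ⊕ Fin r → G ⊕ G ⊕ Fin r :=
  Sum.map (h * ·) (Sum.map (h * ·) id)

lemma shift_one : shift (r := r) (1 : G) = id := by
  ext (b | b | b) <;> simp [shift]

lemma shift_shift (g h : G) (b : G ⊕ G ⊕ Fin r) : shift g (shift h b) = shift (g * h) b := by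
  rcases b with b | b | b <;> simp [shift, mul_assoc]

lemma shift_inv_eq_iff (h : G) (a b : G ⊕ G ⊕ Fin r) : shift h⁻¹ a = b ↔ a = shift h b := by
  constructor
  · rintro rfl
    rw [shift_shift, mul_inv_cancel, shift_one, id]
  · rintro rfl
    rw [shift_shift, inv_mul_cancel, shift_one, id]

lemma single_comp_shift (h : G) (b : G ⊕ G ⊕ Fin r) :
    (Pi.single b 1 : G ⊕ G ⊕ Fin r → ZMod 2) ∘ shift h⁻¹ = Pi.single (shift h b) 1 := by
  ext a
  simp [Pi.single_apply, shift_inv_eq_iff]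

/-- A linear map preserving all orbits of coordinate permutations in `G` is one of these
permutations. -/
lemma exists_shift_of_forall_exists_shift [Finite G]
    {φ : (G ⊕ G ⊕ Fin r → ZMod 2) →+ (G ⊕ G ⊕ Fin r → ZMod 2)}
    (hφ : ∀ w, ∃ h : G, φ w = w ∘ shift h⁻¹) : ∃ h : G, ∀ w, φ w = w ∘ shift h⁻¹ := by
  have hsingle : ∀ b, ∃ h : G, φ (Pi.single b 1) = Pi.single (shift h b) 1 := fun b => by
    obtain ⟨h, hh⟩ := hφ (Pi.single b 1)
    exact ⟨h, hh.trans (single_comp_shift h b)⟩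
  have hpair : ∀ a b, ∃ h : G, φ (Pi.single a 1) + φ (Pi.single b 1) =
      Pi.single (shift h a) 1 + Pi.single (shift h b) 1 := fun a b => by
    obtain ⟨h, hh⟩ := hφ (Pi.single a 1 + Pi.single b 1)
    rw [map_add] at hh
    refine ⟨h, hh.trans ?_⟩
    rw [← single_comp_shift, ← single_comp_shift]
    rfl
  have hright : ∀ h x y : G, φ (Pi.single (.inl x) 1) = Pi.single (.inl (h * x)) 1 →
      φ (Pi.single (.inr (.inl y)) 1) = Pi.single (.inr (.inl (h * y))) 1 := by
    intro h x y hx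
    obtain ⟨h', hh⟩ := hpair (.inl x) (.inr (.inl y))
    obtain ⟨t, ht⟩ := hsingle (.inr (.inl y))
    have h1 := congrFun hh (.inl (h * x))
    rw [hx, ht] at h1
    have h2 : h' = h := by
      by_contra hne
      simp [shift, Ne.symm hne] at h1
    rw [hx, h2] at hh
    exact add_left_cancel hh
  have hleft : ∀ h x y : G, φ (Pi.single (.inr (.inl y)) 1) = Pi.single (.inr (.inl (h * y))) 1 →
      φ (Pi.single (.inl x) 1) = Pi.single (.inl (h * x)) 1 := by
    intro h x y hy
    obtain ⟨h', hh⟩ := hpair (.inl x) (.inr (.inl y))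
    obtain ⟨t, ht⟩ := hsingle (.inl x)
    have h1 := congrFun hh (.inr (.inl (h * y)))
    rw [hy, ht] at h1
    have h2 : h' = h := by
      by_contra hne
      simp [shift, Ne.symm hne] at h1
    rw [hy, h2] at hh
    exact add_right_cancel hh
  obtain ⟨h, hh⟩ := hsingle (.inl 1)
  refine ⟨h, fun w => ?_⟩
  let ψ : (G ⊕ G ⊕ Fin r → ZMod 2) →+ (G ⊕ G ⊕ Fin r → ZMod 2) :=
    { toFun := fun w => w ∘ shift h⁻¹, map_zero' := rfl, map_add' := fun _ _ => rfl }
  suffices φ = ψ from DFunLike.congr_fun this w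
  refine AddMonoidHom.functions_ext _ _ _ fun b x => ?_
  have hx : ∀ x : ZMod 2, x = 0 ∨ x = 1 := by decide
  rcases hx x with rfl | rfl
  · rw [Pi.single_zero, map_zero, map_zero]
  refine Eq.trans ?_ (single_comp_shift h b).symm
  rcases b with b | b | b
  · exact hleft h b 1 (hright h 1 1 hh)
  · exact hright h 1 b hh
  · exact (hsingle _).choose_spec

/-- The action on the points of projective space by permuting coordinates. -/
abbrev projectiveAction : MulAction G {w : G ⊕ G ⊕ Fin r → ZMod 2 // w ≠ 0} where
  smul h w := ⟨w.1 ∘ shift h⁻¹, fun e => w.2 (by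
    ext b
    have := congrFun e (shift h b)
    rwa [Function.comp_apply, (shift_inv_eq_iff h _ b).2 rfl] at this)⟩
  one_smul w := Subtype.ext (by
    change w.1 ∘ shift 1⁻¹ = w.1
    rw [inv_one, shift_one, Function.comp_id])
  mul_smul g h w := Subtype.ext (funext fun b => by
    change w.1 (shift (g * h)⁻¹ b) = w.1 (shift h⁻¹ (shift g⁻¹ b))
    rw [shift_shift, mul_inv_rev])

end CoordinateAction

/-- Projective spaces over `ZMod 2` can be coloured with colour-preserving automorphism group
`G`. -/
theorem exists_coloured_quasigroup.{u} (G : Type u) [Group G] [Fintype G] (r : ℕ) :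
    ∃ (V : Type u) (_ : Fintype V) (_ : MulAction G V) (SV : SteinerQuasigroup V) (K : ℕ)
      (col : V → Fin K), Fintype.card V + 1 = 2 ^ (2 * Fintype.card G + r) ∧ FaithfulSMul G V ∧
      (∀ (h : G) v w, h • SV.op v w = SV.op (h • v) (h • w)) ∧
      (∀ (h : G) v, col (h • v) = col v) ∧
      ∀ g ∈ SV.autSubgroup, (∀ v, col (g v) = col v) → ∃ h : G, ∀ v, g v = h • v := by
  let := projectiveAction (G := G) (r := r)
  have hsmul : ∀ (h : G) (v : {w : G ⊕ G ⊕ Fin r → ZMod 2 // w ≠ 0}),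
    (h • v).1 = v.1 ∘ shift h⁻¹ := fun _ _ => rfl
  let e := Fintype.equivFin (Quotient (MulAction.orbitRel G {w : G ⊕ G ⊕ Fin r → ZMod 2 // w ≠ 0}))
  refine ⟨_, inferInstance, this, projectiveQuasigroup _, _, fun v => e (Quotient.mk _ v),
    ?_, ⟨fun {g h} hgh => ?_⟩, fun h v w => ?_, fun h v => ?_, fun g hg hcol => ?_⟩
  · have h1 := Fintype.card_subtype_compl (fun w : G ⊕ G ⊕ Fin r → ZMod 2 => w = 0)
    have h2 : Fintype.card (G ⊕ G ⊕ Fin r → ZMod 2) = 2 ^ (2 * Fintype.card G + r) := by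
      simp [ZMod.card, two_mul, add_assoc]
    rw [Fintype.card_subtype_eq, h2] at h1
    have h3 : 0 < 2 ^ (2 * Fintype.card G + r) := by positivity
    simp only [ne_eq]
    omega
  · have h1 := congrArg Subtype.val (hgh ⟨Pi.single (.inl 1) 1, by simp⟩)
    rw [hsmul, hsmul, single_comp_shift, single_comp_shift] at h1
    have h2 := congrFun h1 (.inl g)
    by_contra hne
    simp [shift, Pi.single_apply, hne] at h2
  · by_cases hvw : v = w
    · rw [hvw, SteinerQuasigroup.op_self, SteinerQuasigroup.op_self]
    · refine Subtype.ext ?_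
      rw [hsmul, projectiveQuasigroup_op_val hvw,
        projectiveQuasigroup_op_val ((MulAction.injective h).ne hvw)]
      rfl
  · exact congrArg e (Quotient.sound (MulAction.orbitRel_apply.2 ⟨h, rfl⟩))
  · obtain ⟨φ, hφ⟩ := exists_addMonoidHom_of_projective_aut hg
    obtain ⟨h, hh⟩ := exists_shift_of_forall_exists_shift (φ := φ) fun w => by
      by_cases hw : w = 0
      · exact ⟨1, by rw [hw, map_zero]; rfl⟩
      · obtain ⟨h, hh⟩ := MulAction.orbitRel_apply.1 (Quotient.exact (e.injective (hcol ⟨w, hw⟩)))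
        refine ⟨h, ?_⟩
        rw [← hsmul h ⟨w, hw⟩]
        exact (hφ ⟨w, hw⟩).trans (congrArg Subtype.val hh).symm
    exact ⟨h, fun v => Subtype.ext (by rw [← hφ, hh, hsmul])⟩

/-- The choice of the parameters `m` and `c` for a given order `u`. -/
lemma exists_order_parameters {N u : ℕ} (hN : N % 2 = 0) (hN0 : 0 < N)
    (hu : N % 3 = 1 ∧ u % 6 = 1 ∨ N % 3 = 2 ∧ u % 6 = 3) :
    ∃ m c : ℕ, N ≤ m ∧ m < 2 * N ∧ u + 1 + 6 * m = N * c ∧ c % 6 = 5 := by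
  obtain ⟨t, q, ht⟩ : ∃ t q : ℤ, 3 * t = N * q + 1 := by
    rcases hu with ⟨h, -⟩ | ⟨h, -⟩
    · exact ⟨(2 * N + 1) / 3, 2, by omega⟩
    · exact ⟨(N + 1) / 3, 1, by omega⟩
  obtain ⟨s, hs⟩ : ∃ s : ℤ, 2 * s = N - (u + 1) := ⟨(N - (u + 1)) / 2, by omega⟩
  have h1 := Int.emod_nonneg (t * s) (b := N) (by omega)
  have h2 := Int.emod_lt_of_pos (t * s) (b := N) (by omega)
  have h3 := Int.emod_add_mul_ediv (t * s) N
  obtain ⟨m, hm⟩ : ∃ m : ℕ, (m : ℤ) = t * s % N + N := ⟨(t * s % N + N).toNat, by omega⟩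
  have h4 : (u + 1 + 6 * m : ℤ) = N * (2 * (q * s - 3 * (t * s / N) + 3) + 1) := by
    linear_combination hs + 6 * hm + 6 * h3 + 2 * s * ht
  have h5 : 0 < 2 * (q * s - 3 * (t * s / N) + 3) + 1 :=
    pos_of_mul_pos_right (by omega : (0 : ℤ) < N * (2 * (q * s - 3 * (t * s / N) + 3) + 1))
      (by omega)
  generalize q * s - 3 * (t * s / N) + 3 = z at h4 h5
  obtain ⟨c, hc⟩ : ∃ c : ℕ, (c : ℤ) = 2 * z + 1 := ⟨(2 * z + 1).toNat, by omega⟩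
  rw [← hc] at h4
  have h6 : u + 1 + 6 * m = N * c := by exact_mod_cast h4
  refine ⟨m, c, by omega, by omega, h6, ?_⟩
  have h7 : (u + 1) % 3 = N % 3 * (c % 3) % 3 := by
    rw [← Nat.mul_mod, ← h6]
    omega
  have h8 : c % 3 = 2 := by
    rcases hu with ⟨h, h'⟩ | ⟨h, h'⟩ <;> rw [h] at h7 <;> omega
  omega

/-- The construction for one admissible residue class. -/
lemma exists_isSTS_of_residue (G : Type*) [Group G] [Fintype G] (r : ℕ) :
    ∃ M : ℕ, ∀ u : ℕ, M ≤ u → (2 ^ (2 * Fintype.card G + r + 1) % 3 = 1 ∧ u % 6 = 1 ∨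
      2 ^ (2 * Fintype.card G + r + 1) % 3 = 2 ∧ u % 6 = 3) →
      ∃ T : Finset (Finset (Fin u)), IsSTS T ∧ Nonempty (G ≃* autGroup T) := by
  obtain ⟨V, _, _, SV, K, col, hV, _, hop, hcol, hall⟩ := exists_coloured_quasigroup G r
  have hG : 1 ≤ Fintype.card G := Fintype.card_pos
  have hfour : 4 ≤ Fintype.card V + 1 := by
    rw [hV]
    exact Nat.pow_le_pow_right (n := 2) (by omega) (by omega : 2 ≤ 2 * Fintype.card G + r)
  have : Nontrivial V := Fintype.one_lt_card_iff_nontrivial.1 (by omega)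
  rw [pow_succ, ← hV]
  set N := (Fintype.card V + 1) * 2 with hN
  set D := (4 * N + 10).factorial with hD
  have hD1 : 4 * N + 10 ≤ D := Nat.self_le_factorial _
  refine ⟨N * (20 * D + 4 * K), fun u hMu hu => ?_⟩
  obtain ⟨m, c, hNm, hmN, huc, hc⟩ := exists_order_parameters (by omega) (by omega) hu
  have hK : 20 * D + 4 * K ≤ c := Nat.le_of_mul_le_mul_left (by omega) (by omega : 0 < N)
  have : NeZero c := ⟨by omega⟩
  have hX : Fintype.card (Fin (2 * c - 1 - 6 * m)) + 6 * m + 1 = 2 * c := by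
    rw [Fintype.card_fin]
    omega
  obtain ⟨SX⟩ := exists_steinerQuasigroup_of_card (X := Fin (2 * c - 1 - 6 * m))
    (k := (2 * c - 1 - 6 * m) / 6) (by
      rw [Fintype.card_fin]
      omega)
  obtain ⟨H, hH, hrigid⟩ := ConcretePrism.exists_rigid_holes (m := m) (by omega) (by omega)
    (by omega) hK (Nat.factorial_dvd_factorial (by omega : Fintype.card V ≤ 4 * N + 10)) hX
  have hA : Fintype.card (ZMod 2 × ZMod c) = 2 * c := by simp [ZMod.card]
  obtain ⟨e⟩ := nonempty_mulEquiv_moore_aut (SX := SX) hH (by omega) hrigid hop hcol hall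
  refine SteinerQuasigroup.exists_isSTS_fin _ ?_ e
  rw [Fintype.card_sum, Fintype.card_prod, hA]
  have h1 : N * c = Fintype.card V * (2 * c) + 2 * c := by
    rw [hN]
    ring
  omega

/-- **Theorem 1.1.** If `G` is a finite group then there is an integer `M_G` such
that, for `u ≥ M_G` and `u ≡ 1` or `3 (mod 6)`, there is a Steiner triple system on
`u` points whose automorphism group is isomorphic to `G`. -/
theorem stmt0 (G : Type*) [Group G] [Fintype G] :
    ∃ M : ℕ, ∀ u : ℕ, M ≤ u → u % 6 = 1 ∨ u % 6 = 3 →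
      ∃ T : Finset (Finset (Fin u)), IsSTS T ∧ Nonempty (G ≃* autGroup T) := by
  obtain ⟨M₀, h₀⟩ := exists_isSTS_of_residue G 0
  obtain ⟨M₁, h₁⟩ := exists_isSTS_of_residue G 1
  have hpow : 2 ^ (2 * Fintype.card G) % 3 = 1 := by
    rw [pow_mul, Nat.pow_mod]
    simp
  refine ⟨M₀ + M₁, fun u hu hmod => ?_⟩
  rcases hmod with hmod | hmod
  · exact h₁ u (by omega) (.inl ⟨by rw [pow_succ, pow_succ]; omega, hmod⟩)
  · exact h₀ u (by omega) (.inr ⟨by rw [add_zero, pow_succ]; omega, hmod⟩)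

end
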